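/- arXiv:1312.6076 — 2 statements merged into one kernel-verified Lean document; each statement's English description precedes it below -/
import Mathlib

section
/- (Pointwise convergence of the potential to the potential of the initial datum.) Let d > 2s and let ρ be an admissible weight with exponents (γ₀,γ). Let u be a weak solution of the Cauchy problem ρ u_t + (-Δ)^s(u^m) = 0 with initial datum the positive finite Radon measure μ; let U(x,t) := k ∫_{ℝ^d} |x-y|^{2s-d} u(y,t) ρ(y) dy and let U^μ(x) := k ∫_{ℝ^d} |x-y|^{2s-d} dμ(y) be the Riesz potential of μ. Then there is a Lebesgue-null set N ⊂ (0,∞) such that for EVERY x ∈ ℝ^d, U(x,t) → U^μ(x) as t → 0 with t ∉ N. -/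
open MeasureTheory Filter Topology Set
open scoped ENNReal NNReal

noncomputable section

/-- `d`-dimensional Euclidean space. -/
abbrev Ed (d : ℕ) : Type := EuclideanSpace ℝ (Fin d)

/-- An admissible weight with exponents `(γ₀, γ)` and constants `0 < c < C`:
a measurable, everywhere positive function comparable to `|x|^{-γ₀}` near the
origin and to `|x|^{-γ}` at infinity. -/
def AdmissibleWeight (d : ℕ) (ρ : Ed d → ℝ) (γ₀ γ c C : ℝ) : Prop :=
  0 < c ∧ c < C ∧ Measurable ρ ∧ (∀ x, 0 < ρ x) ∧
    (∀ᵐ x ∂(volume : Measure (Ed d)), ‖x‖ ≤ 1 →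
      c * ‖x‖ ^ (-γ₀) ≤ ρ x ∧ ρ x ≤ C * ‖x‖ ^ (-γ₀)) ∧
    (∀ᵐ x ∂(volume : Measure (Ed d)), 1 < ‖x‖ →
      c * ‖x‖ ^ (-γ) ≤ ρ x ∧ ρ x ≤ C * ‖x‖ ^ (-γ))

/-- The Gagliardo bilinear form `E(v,w)` of order `s` with normalizing constant `κ`. -/
def gagliardoE (d : ℕ) (s κ : ℝ) (v w : Ed d → ℝ) : ℝ :=
  (κ / 2) * ∫ p : Ed d × Ed d,
    (v p.1 - v p.2) * (w p.1 - w p.2) / ‖p.1 - p.2‖ ^ ((d : ℝ) + 2 * s)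

/-- The squared homogeneous fractional Sobolev seminorm `‖v‖_{Ḣ^s}² = E(v,v)`,
with values in `[0,∞]`. -/
def gagliardoSq (d : ℕ) (s κ : ℝ) (v : Ed d → ℝ) : ℝ≥0∞ :=
  ENNReal.ofReal (κ / 2) * ∫⁻ p : Ed d × Ed d,
    ENNReal.ofReal ((v p.1 - v p.2) ^ 2 / ‖p.1 - p.2‖ ^ ((d : ℝ) + 2 * s))

/-- The weighted `L^p` norm `‖v‖_{p,ρ}`, valued in `[0,∞]`. -/
def wnorm (d : ℕ) (p : ℝ) (ρ v : Ed d → ℝ) : ℝ≥0∞ :=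
  (∫⁻ x : Ed d, ENNReal.ofReal (|v x| ^ p * ρ x)) ^ (1 / p)

/-- Smooth compactly supported test functions on `ℝ^d × (0,∞)`. -/
def IsTestFn (d : ℕ) (φ : Ed d × ℝ → ℝ) : Prop :=
  ContDiff ℝ (⊤ : ℕ∞) φ ∧ HasCompactSupport φ ∧ tsupport φ ⊆ univ ×ˢ Ioi (0 : ℝ)

/-- Conditions (i)–(iii) of the definition of weak solution of
`ρ u_t + (-Δ)^s(u^m) = 0` on `ℝ^d × (0,∞)` (no initial datum prescribed). -/
structure WeakSolCore (d : ℕ) (s m κ : ℝ) (ρ : Ed d → ℝ) (u : Ed d → ℝ → ℝ) : Prop where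
  measurable : Measurable (Function.uncurry u)
  nonneg : ∀ x t, 0 ≤ u x t
  /-- (i), first part: `ess sup_{t>0} ∫ u(·,t) ρ < ∞`. -/
  massBound : ∃ M : ℝ, ∀ᵐ t ∂(volume.restrict (Ioi (0 : ℝ))),
    Integrable (fun x : Ed d => u x t * ρ x) ∧ (∫ x : Ed d, u x t * ρ x) ≤ M
  /-- (i), second part: `u` essentially bounded on `ℝ^d × (τ,∞)` for every `τ > 0`. -/
  essBdd : ∀ τ : ℝ, 0 < τ → ∃ B : ℝ,
    ∀ᵐ p ∂(volume : Measure (Ed d × ℝ)), τ < p.2 → u p.1 p.2 ≤ B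
  /-- (ii), first part: `‖u^m(·,t)‖_{Ḣ^s} < ∞` for a.e. `t > 0`. -/
  energyFinite : ∀ᵐ t ∂(volume.restrict (Ioi (0 : ℝ))),
    gagliardoSq d s κ (fun x => u x t ^ m) < ⊤
  /-- (ii), second part: `t ↦ ‖u^m(·,t)‖_{Ḣ^s}²` locally integrable on `(0,∞)`. -/
  energyLocInt : ∀ t₁ t₂ : ℝ, 0 < t₁ → t₁ < t₂ →
    (∫⁻ t in Ioc t₁ t₂, gagliardoSq d s κ (fun x => u x t ^ m)) ≠ ⊤
  /-- (iii): the weak formulation against all test functions. -/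
  weakForm : ∀ φ : Ed d × ℝ → ℝ, IsTestFn d φ →
    -(∫ t in Ioi (0 : ℝ), ∫ x : Ed d, u x t * deriv (fun τ => φ (x, τ)) t * ρ x)
      + ∫ t in Ioi (0 : ℝ),
          gagliardoE d s κ (fun x => u x t ^ m) (fun x => φ (x, t)) = 0

/-- Condition (iv): `ρ(·)u(·,t) → μ` as `t → 0` essentially, tested against all
bounded continuous functions. -/
def HasInitialTrace (d : ℕ) (ρ : Ed d → ℝ) (u : Ed d → ℝ → ℝ)
    (μ : Measure (Ed d)) : Prop :=
  ∃ N : Set ℝ, volume N = 0 ∧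
    ∀ φ : Ed d → ℝ, Continuous φ → (∃ B : ℝ, ∀ x, |φ x| ≤ B) →
      Tendsto (fun t => ∫ x : Ed d, φ x * (u x t * ρ x))
        (𝓝[(Ioi (0 : ℝ)) \ N] 0) (𝓝 (∫ x, φ x ∂μ))

/-- Weak solution of the Cauchy problem with initial datum `μ`. -/
def IsWeakSolution (d : ℕ) (s m κ : ℝ) (ρ : Ed d → ℝ) (μ : Measure (Ed d))
    (u : Ed d → ℝ → ℝ) : Prop :=
  WeakSolCore d s m κ ρ u ∧ HasInitialTrace d ρ u μ

/-- The Riesz potential (of order `2s`, constant `k`) of `ρ(·)u(·,t)`, valued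
in `[0,∞]`. -/
def rieszPotU (d : ℕ) (s k : ℝ) (ρ : Ed d → ℝ) (u : Ed d → ℝ → ℝ)
    (x : Ed d) (t : ℝ) : ℝ≥0∞ :=
  ENNReal.ofReal k *
    ∫⁻ y : Ed d, (ENNReal.ofReal ‖x - y‖) ^ (2 * s - (d : ℝ)) *
      ENNReal.ofReal (u y t * ρ y)

/-- The Riesz potential (of order `2s`, constant `k`) of a measure `μ`. -/
def rieszPotMeas (d : ℕ) (s k : ℝ) (μ : Measure (Ed d)) (x : Ed d) : ℝ≥0∞ :=
  ENNReal.ofReal k *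
    ∫⁻ y, (ENNReal.ofReal ‖x - y‖) ^ (2 * s - (d : ℝ)) ∂μ

/-!
Replace the Riesz profile `r ^ (-(d - 2s))` by the bounded function `(ε + r ^ 2) ^ (-(d - 2s) / 2)`.
Centred at any point it is superharmonic for `(-Δ)^s`: pairing `y` with its image under the
inversion in the sphere `‖y‖ = ‖x‖` reduces the sign of the singular integral to the convexity of
`t ↦ t ^ (-(d - 2s) / 2)`. Cutting the function off at radius `R` costs an error controlled by the
part of `u ^ m` at distance `R`, which vanishes as `R → ∞`. Testing the equation therefore shows
that the regularized potential of `ρ u` at a fixed point is, up to a null set of times, a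
nonincreasing function of time, bounded by that of the initial datum. Letting `ε → 0` gives
`U(x, t) ≤ U^μ(x)` for every `x`. Conversely, the Riesz potential is the supremum of the regularized
ones, which converge as `t → 0`; so `U^μ(x)` is at most the lower limit of `U(x, t)`.
-/

section RadialProfile

/-- The smooth bounded substitute `(ε + r²)^(-a/2)` for the Riesz profile `r^(-a)`. -/
def bubble (ε a r : ℝ) : ℝ := (ε + r ^ 2) ^ (-(a / 2))

/-- A smooth radial cutoff, equal to `1` for `r ≤ R` and to `0` for `r ≥ 2R`; being a function of
`r²`, it is also smooth as a function of a vector of norm `r`. -/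
def cutoff (R r : ℝ) : ℝ := Real.smoothTransition (2 - (r / R) ^ 2)

/-- The truncated bubble, from which the test functions in space are built. -/
def profile (ε a R r : ℝ) : ℝ := bubble ε a r * cutoff R r

/-- The radial form of superharmonicity, up to an error `e`. The points `r z` and `r / z` are
exchanged by the inversion in the sphere of radius `r`, and `z ^ (-a)` is the weight with which the
change of variables given by this inversion transports the Riesz kernel. -/
def PairingBound (a : ℝ) (e Φ : ℝ → ℝ) : Prop :=
  ∀ ⦃r z : ℝ⦄, 0 < r → 0 < z → z < 1 →
    -(e r * (z ^ (-a) * (1 - z) ^ 2)) ≤ Φ r - Φ (r * z) + z ^ (-a) * (Φ r - Φ (r / z))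

variable {ε a r z R : ℝ}

lemma convexOn_rpow_neg {q : ℝ} (hq : 0 ≤ q) : ConvexOn ℝ (Ioi 0) fun x : ℝ => x ^ (-q) := by
  refine ⟨convex_Ioi 0, fun x hx y hy α β hα hβ hαβ => ?_⟩
  have hlog := strictConcaveOn_log_Ioi.concaveOn.2 hx hy hα hβ hαβ
  have hexp := convexOn_exp.2 (mem_univ (Real.log x * -q)) (mem_univ (Real.log y * -q)) hα hβ hαβ
  have hpos : 0 < α • x + β • y := convex_Ioi 0 hx hy hα hβ hαβ
  beta_reduce
  rw [Real.rpow_def_of_pos hx, Real.rpow_def_of_pos hy, Real.rpow_def_of_pos hpos]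
  refine (Real.exp_le_exp.2 ?_).trans hexp
  simp only [smul_eq_mul] at hlog ⊢
  nlinarith

lemma sq_rpow_neg_half (hr : 0 ≤ r) : (r ^ 2) ^ (-(a / 2)) = r ^ (-a) := by
  rw [← Real.rpow_natCast, ← Real.rpow_mul hr]
  congr 1
  push_cast
  ring

lemma bubble_pos (hε : 0 < ε) : 0 < bubble ε a r := by
  unfold bubble
  positivity

lemma bubble_antitoneOn (hε : 0 < ε) (ha : 0 ≤ a) : AntitoneOn (bubble ε a) (Ici 0) :=
  fun r (hr : 0 ≤ r) _ _ h =>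
    Real.rpow_le_rpow_of_nonpos (by positivity) (by gcongr) (by linarith)

lemma bubble_le (hε : 0 < ε) (ha : 0 ≤ a) : bubble ε a r ≤ ε ^ (-(a / 2)) :=
  Real.rpow_le_rpow_of_nonpos hε (by nlinarith [sq_nonneg r]) (by linarith)

lemma bubble_le_rpow (hε : 0 ≤ ε) (ha : 0 ≤ a) (hr : 0 < r) : bubble ε a r ≤ r ^ (-a) := by
  rw [← sq_rpow_neg_half hr.le]
  exact Real.rpow_le_rpow_of_nonpos (by positivity) (by linarith) (by linarith)

lemma rpow_neg_mul_bubble (hε : 0 ≤ ε) (hz : 0 ≤ z) :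
    z ^ (-a) * bubble ε a r = (z ^ 2 * (ε + r ^ 2)) ^ (-(a / 2)) := by
  rw [Real.mul_rpow (by positivity) (by positivity), sq_rpow_neg_half hz, bubble]

lemma rpow_neg_mul_bubble_div (hε : 0 ≤ ε) (hz : 0 < z) :
    z ^ (-a) * bubble ε a (r / z) = (ε * z ^ 2 + r ^ 2) ^ (-(a / 2)) := by
  rw [rpow_neg_mul_bubble hε hz.le]
  congr 1
  field_simp

lemma bubble_mul_le (hε : 0 < ε) (ha : 0 ≤ a) (hz : 0 < z) (hz1 : z ≤ 1) :
    bubble ε a (r * z) ≤ z ^ (-a) * bubble ε a r := by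
  rw [rpow_neg_mul_bubble hε.le hz.le]
  have : z ^ 2 * ε ≤ ε := mul_le_of_le_one_left hε.le (pow_le_one₀ hz.le hz1)
  exact Real.rpow_le_rpow_of_nonpos (by positivity) (by linarith) (by linarith)

lemma bubble_le_rpow_neg_mul_bubble_div (hε : 0 < ε) (ha : 0 ≤ a) (hz : 0 < z) (hz1 : z ≤ 1) :
    bubble ε a r ≤ z ^ (-a) * bubble ε a (r / z) := by
  rw [rpow_neg_mul_bubble_div hε.le hz]
  have : ε * z ^ 2 ≤ ε := mul_le_of_le_one_right hε.le (pow_le_one₀ hz.le hz1)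
  exact Real.rpow_le_rpow_of_nonpos (by positivity) (by linarith) (by linarith)

/-- With `θ = ε / (ε + r²)`, the quantities `ε + (rz)²` and `εz² + r²` are the two convex
combinations of `ε + r²` and `z²(ε + r²)` with weights `θ` and `1 - θ`. -/
lemma bubble_pairingBound (hε : 0 < ε) (ha : 0 ≤ a) : PairingBound a 0 (bubble ε a) := by
  intro r z hr hz _
  have hA : 0 < ε + r ^ 2 := by positivity
  have hB : 0 < z ^ 2 * (ε + r ^ 2) := by positivity
  have hconv := convexOn_rpow_neg (q := a / 2) (by positivity)
  have hθ : 0 ≤ ε / (ε + r ^ 2) := by positivity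
  have hθ' : 0 ≤ r ^ 2 / (ε + r ^ 2) := by positivity
  have hsum : ε / (ε + r ^ 2) + r ^ 2 / (ε + r ^ 2) = 1 := by field_simp
  have inner := hconv.2 hA hB hθ hθ' hsum
  have outer := hconv.2 hB hA hθ hθ' hsum
  have inner_eq : ε / (ε + r ^ 2) * (ε + r ^ 2) + r ^ 2 / (ε + r ^ 2) * (z ^ 2 * (ε + r ^ 2)) =
      ε + (r * z) ^ 2 := by field_simp
  have outer_eq : ε / (ε + r ^ 2) * (z ^ 2 * (ε + r ^ 2)) + r ^ 2 / (ε + r ^ 2) * (ε + r ^ 2) =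
      ε * z ^ 2 + r ^ 2 := by field_simp
  simp only [smul_eq_mul, inner_eq, outer_eq, ← rpow_neg_mul_bubble hε.le hz.le,
    ← rpow_neg_mul_bubble_div hε.le hz] at inner outer
  simp only [Pi.zero_apply, zero_mul, neg_zero]
  simp only [bubble] at inner outer ⊢
  linear_combination inner + outer +
    ((ε + r ^ 2) ^ (-(a / 2)) + z ^ (-a) * (ε + r ^ 2) ^ (-(a / 2))) * hsum

lemma cutoff_nonneg : 0 ≤ cutoff R r := Real.smoothTransition.nonneg _

lemma cutoff_le_one : cutoff R r ≤ 1 := Real.smoothTransition.le_one _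

lemma cutoff_antitoneOn (hR : 0 ≤ R) : AntitoneOn (cutoff R) (Ici 0) :=
  fun r (hr : 0 ≤ r) _ _ h => Real.smoothTransition.monotone (by gcongr)

lemma cutoff_eq_one (hr : 0 ≤ r) (h : r ≤ R) : cutoff R r = 1 := by
  apply Real.smoothTransition.one_of_one_le
  have hR := hr.trans h
  have : (r / R) ^ 2 ≤ 1 := pow_le_one₀ (div_nonneg hr hR) (div_le_one_of_le₀ h hR)
  linarith

lemma cutoff_eq_zero (hR : 0 < R) (h : 2 * R ≤ r) : cutoff R r = 0 := by
  apply Real.smoothTransition.zero_of_nonpos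
  have : 2 ≤ r / R := (le_div_iff₀ hR).2 h
  nlinarith

lemma abs_second_difference_le {f : ℝ → ℝ} {K : ℝ≥0} (hf : Differentiable ℝ f)
    (hf' : LipschitzWith K (deriv f)) (x h : ℝ) :
    |f (x + h) - f x - (f x - f (x - h))| ≤ K * h ^ 2 := by
  have hder (y : ℝ) : HasDerivAt (fun y => f (y + h) - f y) (deriv f (y + h) - deriv f y) y :=
    ((hf (y + h)).hasDerivAt.comp_add_const y h).sub (hf y).hasDerivAt
  have hbound (y : ℝ) : ‖deriv f (y + h) - deriv f y‖ ≤ K * |h| := by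
    simpa using hf'.norm_sub_le (y + h) y
  have := convex_univ.norm_image_sub_le_of_norm_hasDerivWithin_le
    (fun y _ => (hder y).hasDerivWithinAt) (fun y _ => hbound y)
    (mem_univ (x - h)) (mem_univ x)
  simpa [mul_assoc, ← sq] using this

lemma exists_exp_second_difference_ge {f : ℝ → ℝ} (hf : ContDiff ℝ 2 f)
    (hsupp : HasCompactSupport (deriv f)) (ha : 0 ≤ a) :
    ∃ C, 0 ≤ C ∧ ∀ l h, 0 ≤ h →
      -(C * (Real.exp (a * h) * h ^ 2)) ≤
        f l - f (l + h) + Real.exp (a * h) * (f l - f (l - h)) := by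
  have hf' : ContDiff ℝ 1 (deriv f) := (contDiff_succ_iff_deriv.1 hf).2.2
  have hdiff : Differentiable ℝ f := hf.differentiable two_ne_zero
  obtain ⟨K, hK⟩ := hf'.lipschitzWith_of_hasCompactSupport hsupp one_ne_zero
  obtain ⟨L, hL⟩ := hsupp.exists_bound_of_continuous hf'.continuous
  have hL0 : 0 ≤ L := (norm_nonneg _).trans (hL 0)
  refine ⟨K + a * L, by positivity, fun l h hh => ?_⟩
  have hsecond := (abs_le.1 (abs_second_difference_le hdiff hK l h)).2
  have hfirst : |f l - f (l - h)| ≤ L * h := by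
    simpa [abs_of_nonneg hh] using convex_univ.norm_image_sub_le_of_norm_deriv_le
      (fun x _ => hdiff x) (fun x _ => hL x) (mem_univ (l - h)) (mem_univ l)
  have hexp : Real.exp (a * h) - 1 ≤ a * h * Real.exp (a * h) := by
    have := Real.add_one_le_exp (-(a * h))
    rw [Real.exp_neg] at this
    have hpos := Real.exp_pos (a * h)
    have := mul_le_mul_of_nonneg_left this hpos.le
    rw [mul_inv_cancel₀ hpos.ne'] at this
    linarith
  have hone : 1 ≤ Real.exp (a * h) := Real.one_le_exp (by positivity)
  have hmixed : -(a * h * Real.exp (a * h) * (L * h)) ≤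
      (Real.exp (a * h) - 1) * (f l - f (l - h)) := by
    refine neg_le_of_abs_le ?_
    rw [abs_mul, abs_of_nonneg (sub_nonneg.2 hone)]
    gcongr
  have hK' : (K : ℝ) * h ^ 2 ≤ K * h ^ 2 * Real.exp (a * h) :=
    le_mul_of_one_le_right (by positivity) hone
  linarith

/-- The cutoff in logarithmic radial coordinates, where the dilations `r ↦ r z` and `r ↦ r / z`
become translations. -/
def logCutoff (l : ℝ) : ℝ := Real.smoothTransition (2 - Real.exp (2 * l))

lemma cutoff_eq_logCutoff (hR : 0 < R) (hr : 0 < r) :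
    cutoff R r = logCutoff (Real.log (r / R)) := by
  rw [cutoff, logCutoff, two_mul, Real.exp_add, Real.exp_log (by positivity), sq]

lemma contDiff_logCutoff : ContDiff ℝ 2 logCutoff :=
  Real.smoothTransition.contDiff.comp
    (contDiff_const.sub (Real.contDiff_exp.comp (contDiff_const.mul contDiff_id)))

lemma hasCompactSupport_deriv_logCutoff : HasCompactSupport (deriv logCutoff) := by
  refine HasCompactSupport.intro (isCompact_Icc (a := 0) (b := 1)) fun x hx => ?_
  rw [mem_Icc, not_and_or, not_le, not_le] at hx
  rcases hx with hx | hx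
  · have : logCutoff =ᶠ[𝓝 x] fun _ => 1 := by
      filter_upwards [Iio_mem_nhds hx] with y (hy : y < 0)
      refine Real.smoothTransition.one_of_one_le ?_
      have := Real.exp_le_one_iff.2 (by linarith : 2 * y ≤ 0)
      linarith
    rw [this.deriv_eq, deriv_const]
  · have : logCutoff =ᶠ[𝓝 x] fun _ => 0 := by
      filter_upwards [Ioi_mem_nhds hx] with y (hy : 1 < y)
      refine Real.smoothTransition.zero_of_nonpos ?_
      have := Real.add_one_le_exp (2 * y)
      linarith
    rw [this.deriv_eq, deriv_const]

lemma neg_log_le_two_mul_one_sub (hz : 1 / 2 ≤ z) (hz1 : z ≤ 1) :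
    -Real.log z ≤ 2 * (1 - z) := by
  have hz0 : 0 < z := by linarith
  have hinv := Real.one_sub_inv_le_log_of_pos hz0
  have : z⁻¹ - 1 ≤ 2 * (1 - z) := by
    rw [sub_le_iff_le_add, inv_le_iff_one_le_mul₀ hz0]
    nlinarith
  linarith

lemma exists_cutoff_pairing (ha : 0 ≤ a) :
    ∃ K, 0 ≤ K ∧ ∀ R r z : ℝ, 0 < R → 0 < r → 0 < z → z < 1 →
      -(K * (z ^ (-a) * (1 - z) ^ 2)) ≤
        cutoff R r - cutoff R (r / z) + z ^ (-a) * (cutoff R r - cutoff R (r * z)) := by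
  obtain ⟨C, hC, hlog⟩ := exists_exp_second_difference_ge contDiff_logCutoff
    hasCompactSupport_deriv_logCutoff ha
  refine ⟨max 4 (4 * C), by positivity, fun R r z hR hr hz hz1 => ?_⟩
  have hzp : 0 < z ^ (-a) := by positivity
  rcases le_or_gt z (1 / 2) with hz2 | hz2
  · have houter : cutoff R (r / z) ≤ cutoff R r :=
      cutoff_antitoneOn hR.le hr.le (div_nonneg hr.le hz.le) (le_div_self hr.le hz hz1.le)
    have hinner : cutoff R (r * z) ≤ 1 := cutoff_le_one
    have hr0 : 0 ≤ cutoff R r := cutoff_nonneg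
    have hmax : 1 ≤ max 4 (4 * C) * (1 - z) ^ 2 := by
      calc (1 : ℝ) = 4 * (1 / 2) ^ 2 := by norm_num
        _ ≤ _ := by gcongr; exacts [le_max_left _ _, by linarith]
    nlinarith
  · have hpow : z ^ (-a) = Real.exp (a * -Real.log z) := by
      rw [Real.rpow_def_of_pos hz]
      ring_nf
    have hlog0 : 0 ≤ -Real.log z := neg_nonneg.2 (Real.log_nonpos hz.le hz1.le)
    have key := hlog (Real.log (r / R)) (-Real.log z) hlog0
    rw [← hpow, sub_neg_eq_add, ← sub_eq_add_neg, ← Real.log_div (by positivity) hz.ne',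
      ← Real.log_mul (by positivity) hz.ne', div_right_comm, ← mul_div_right_comm,
      ← cutoff_eq_logCutoff hR hr, ← cutoff_eq_logCutoff hR (by positivity),
      ← cutoff_eq_logCutoff hR (by positivity)] at key
    have hlog2 := neg_log_le_two_mul_one_sub hz2.le hz1.le
    refine le_trans (neg_le_neg ?_) key
    calc C * (z ^ (-a) * (-Real.log z) ^ 2) ≤ C * (z ^ (-a) * (2 * (1 - z)) ^ 2) := by gcongr
      _ = 4 * C * (z ^ (-a) * (1 - z) ^ 2) := by ring
      _ ≤ _ := by gcongr; exact le_max_right _ _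

lemma measurable_profile (ε a R : ℝ) : Measurable (profile ε a R) := by
  unfold profile bubble cutoff
  fun_prop

lemma profile_nonneg (hε : 0 < ε) : 0 ≤ profile ε a R r :=
  mul_nonneg (bubble_pos hε).le cutoff_nonneg

lemma profile_le_bubble (hε : 0 < ε) : profile ε a R r ≤ bubble ε a r :=
  mul_le_of_le_one_right (bubble_pos hε).le cutoff_le_one

lemma profile_eq_zero (hR : 0 < R) (h : 2 * R ≤ r) : profile ε a R r = 0 := by
  rw [profile, cutoff_eq_zero hR h, mul_zero]

lemma profile_antitoneOn (hε : 0 < ε) (ha : 0 ≤ a) (hR : 0 ≤ R) :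
    AntitoneOn (profile ε a R) (Ici 0) :=
  fun _ hr _ hr' h => mul_le_mul (bubble_antitoneOn hε ha hr hr' h)
    (cutoff_antitoneOn hR hr hr' h) cutoff_nonneg (bubble_pos hε).le

lemma bubble_mul_cutoff_pairing_le (hε : 0 < ε) (ha : 0 ≤ a) (hR : 0 ≤ R) (hr : 0 < r)
    (hz : 0 < z) (hz1 : z < 1) :
    bubble ε a r *
        (cutoff R r - cutoff R (r / z) + z ^ (-a) * (cutoff R r - cutoff R (r * z))) ≤
      profile ε a R r - profile ε a R (r * z) +
        z ^ (-a) * (profile ε a R r - profile ε a R (r / z)) := by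
  have hbubble := bubble_pairingBound hε ha hr hz hz1
  rw [Pi.zero_apply, zero_mul, neg_zero] at hbubble
  have houter : cutoff R (r / z) ≤ cutoff R r :=
    cutoff_antitoneOn hR hr.le (div_nonneg hr.le hz.le) (le_div_self hr.le hz hz1.le)
  have hinner : cutoff R r ≤ cutoff R (r * z) :=
    cutoff_antitoneOn hR (mul_nonneg hr.le hz.le) hr.le (mul_le_of_le_one_right hr.le hz1.le)
  simp only [profile]
  linear_combination mul_nonneg (cutoff_nonneg (R := R) (r := r)) hbubble +
    mul_le_mul_of_nonneg_right (bubble_mul_le (r := r) hε ha hz hz1.le) (sub_nonneg.2 hinner) +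
    mul_le_mul_of_nonneg_right (bubble_le_rpow_neg_mul_bubble_div (r := r) hε ha hz hz1.le)
      (sub_nonneg.2 houter)

lemma exists_profile_pairingBound (ha : 0 ≤ a) :
    ∃ K, 0 ≤ K ∧ ∀ ε R : ℝ, 0 < ε → 0 < R →
      PairingBound a ((Ici R).indicator fun r => K * r ^ (-a)) (profile ε a R) := by
  obtain ⟨K, hK, hcutoff⟩ := exists_cutoff_pairing ha
  refine ⟨K, hK, fun ε R hε hR r z hr hz hz1 => ?_⟩
  refine le_trans ?_ (bubble_mul_cutoff_pairing_le hε ha hR.le hr hz hz1)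
  have hb := bubble_pos (a := a) (r := r) hε
  rcases le_or_gt R r with hRr | hRr
  · rw [indicator_of_mem (mem_Ici.2 hRr)]
    have h1 := mul_le_mul_of_nonneg_left (hcutoff R r z hR hr hz hz1) hb.le
    have h2 := mul_le_mul_of_nonneg_right (bubble_le_rpow hε.le ha hr)
      (by positivity : 0 ≤ K * (z ^ (-a) * (1 - z) ^ 2))
    linarith
  · have houter : cutoff R (r / z) ≤ 1 := cutoff_le_one
    rw [indicator_of_notMem (notMem_Ici.2 hRr), zero_mul, neg_zero, cutoff_eq_one hr.le hRr.le,
      cutoff_eq_one (by positivity) ((mul_le_of_le_one_right hr.le hz1.le).trans hRr.le), sub_self,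
      mul_zero, add_zero]
    exact mul_nonneg hb.le (sub_nonneg.2 houter)

end RadialProfile

section SingularIntegral

open Metric Module

variable {E : Type*} [NormedAddCommGroup E] {a b : ℝ} {x : E}

lemma preimage_sub_left_ball_zero (x : E) (R : ℝ) : (fun y => x - y) ⁻¹' ball 0 R = ball x R := by
  ext y
  simp [dist_eq_norm, norm_sub_rev]

lemma norm_rpow_mul_norm_sub_rpow_le (ha : 0 ≤ a) (hb : 0 ≤ b) (hx : x ≠ 0) (y : E) :
    ‖y‖ ^ (-a) * ‖x - y‖ ^ (-b) ≤
      (‖x‖ / 2) ^ (-b) * ‖y‖ ^ (-a) + (‖x‖ / 2) ^ (-a) * ‖x - y‖ ^ (-b) := by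
  rcases lt_or_ge ‖y‖ (‖x‖ / 2) with h | h
  · have hxy : ‖x‖ / 2 ≤ ‖x - y‖ := by linarith [norm_sub_norm_le x y]
    have : ‖x - y‖ ^ (-b) ≤ (‖x‖ / 2) ^ (-b) :=
      Real.rpow_le_rpow_of_nonpos (by positivity) hxy (by linarith)
    calc ‖y‖ ^ (-a) * ‖x - y‖ ^ (-b) ≤ (‖x‖ / 2) ^ (-b) * ‖y‖ ^ (-a) := by
          rw [mul_comm]
          gcongr
      _ ≤ _ := le_add_of_nonneg_right (by positivity)
  · have : ‖y‖ ^ (-a) ≤ (‖x‖ / 2) ^ (-a) :=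
      Real.rpow_le_rpow_of_nonpos (by positivity) h (by linarith)
    calc ‖y‖ ^ (-a) * ‖x - y‖ ^ (-b) ≤ (‖x‖ / 2) ^ (-a) * ‖x - y‖ ^ (-b) := by gcongr
      _ ≤ _ := le_add_of_nonneg_left (by positivity)

variable [NormedSpace ℝ E] [FiniteDimensional ℝ E] [MeasureSpace E] [BorelSpace E]
  [(volume : Measure E).IsAddHaarMeasure]

lemma integrableOn_norm_sub_rpow [Nontrivial E] (hb : b < finrank ℝ E) (x : E) (R : ℝ) :
    IntegrableOn (fun y => ‖x - y‖ ^ (-b)) (ball x R) := by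
  rw [← preimage_sub_left_ball_zero]
  refine ((Measure.measurePreserving_sub_left volume x).integrableOn_comp_preimage
    (Homeomorph.subLeft x).measurableEmbedding (f := fun y : E => ‖y‖ ^ (-b))).2 ?_
  rw [integrableOn_fun_norm_addHaar volume (f := fun r : ℝ => r ^ (-b))]
  rcases le_or_gt R 0 with hR | hR
  · simp [Ioo_eq_empty_of_le hR]
  have hexp : (-1 : ℝ) < finrank ℝ E - 1 - b := by linarith
  have hint := intervalIntegral.intervalIntegrable_rpow' (a := 0) (b := R) hexp
  rw [intervalIntegrable_iff_integrableOn_Ioo_of_le hR.le] at hint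
  refine hint.congr_fun (fun t ht => ?_) measurableSet_Ioo
  rw [smul_eq_mul, ← Real.rpow_natCast, ← Real.rpow_add ht.1, Nat.cast_pred finrank_pos]
  ring_nf

lemma exists_integral_norm_sub_rpow_eq (b : ℝ) :
    ∃ C, 0 ≤ C ∧ ∀ (x : E) (R : ℝ), 0 < R →
      ∫ y in ball x R, ‖x - y‖ ^ (-b) = C * R ^ ((finrank ℝ E : ℝ) - b) := by
  refine ⟨∫ y in ball (0 : E) 1, ‖y‖ ^ (-b), integral_nonneg fun y => by positivity,
    fun x R hR => ?_⟩
  have hscale := Measure.setIntegral_comp_smul_of_pos volume (fun y : E => ‖y‖ ^ (-b))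
    (ball (0 : E) 1) hR
  simp_rw [norm_smul, Real.norm_of_nonneg hR.le, Real.mul_rpow hR.le (norm_nonneg _)] at hscale
  rw [smul_unitBall_of_pos hR, smul_eq_mul, integral_const_mul,
    eq_inv_mul_iff_mul_eq₀ (by positivity)] at hscale
  rw [← preimage_sub_left_ball_zero,
    (Measure.measurePreserving_sub_left volume x).setIntegral_preimage_emb
      (Homeomorph.subLeft x).measurableEmbedding (fun y => ‖y‖ ^ (-b)),
    ← hscale, sub_eq_add_neg, Real.rpow_add hR, Real.rpow_natCast]
  ring

lemma integrableOn_norm_rpow_mul_norm_sub_rpow [Nontrivial E] (ha : 0 ≤ a)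
    (han : a < finrank ℝ E) (hb : 0 ≤ b) (hbn : b < finrank ℝ E) (hx : x ≠ 0) :
    IntegrableOn (fun y => ‖y‖ ^ (-a) * ‖x - y‖ ^ (-b)) (ball 0 ‖x‖) := by
  have hsub : ball (0 : E) ‖x‖ ⊆ ball x (2 * ‖x‖) := ball_subset_ball' (by simp [two_mul])
  have hzero := integrableOn_norm_sub_rpow han (0 : E) ‖x‖
  simp only [zero_sub, norm_neg] at hzero
  refine ((hzero.const_mul ((‖x‖ / 2) ^ (-b))).add
    (((integrableOn_norm_sub_rpow hbn x _).mono_set hsub).const_mul ((‖x‖ / 2) ^ (-a)))).mono'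
    (by fun_prop) (Eventually.of_forall fun y => ?_)
  rw [Real.norm_of_nonneg (by positivity)]
  exact norm_rpow_mul_norm_sub_rpow_le ha hb hx y

lemma exists_integral_norm_rpow_mul_norm_sub_rpow_le [Nontrivial E] (ha : 0 ≤ a)
    (han : a < finrank ℝ E) (hb : 0 ≤ b) (hbn : b < finrank ℝ E) :
    ∃ C, 0 ≤ C ∧ ∀ x : E, x ≠ 0 →
      ∫ y in ball 0 ‖x‖, ‖y‖ ^ (-a) * ‖x - y‖ ^ (-b) ≤
        C * ‖x‖ ^ ((finrank ℝ E : ℝ) - a - b) := by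
  obtain ⟨C₁, hC₁, h₁⟩ := exists_integral_norm_sub_rpow_eq (E := E) a
  obtain ⟨C₂, hC₂, h₂⟩ := exists_integral_norm_sub_rpow_eq (E := E) b
  refine ⟨(1 / 2) ^ (-b) * C₁ + (1 / 2) ^ (-a) * (C₂ * 2 ^ ((finrank ℝ E : ℝ) - b)),
    by positivity, fun x hx => ?_⟩
  have hr := norm_pos_iff.2 hx
  have hsub : ball (0 : E) ‖x‖ ⊆ ball x (2 * ‖x‖) := ball_subset_ball' (by simp [two_mul])
  have hx_int := integrableOn_norm_sub_rpow hbn x (2 * ‖x‖)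
  have hzero_int := integrableOn_norm_sub_rpow han (0 : E) ‖x‖
  have hzero := h₁ 0 ‖x‖ hr
  simp only [zero_sub, norm_neg] at hzero hzero_int
  have hx_le : ∫ y in ball 0 ‖x‖, ‖x - y‖ ^ (-b) ≤ C₂ * (2 * ‖x‖) ^ ((finrank ℝ E : ℝ) - b) :=
    (setIntegral_mono_set hx_int (Eventually.of_forall fun y => by positivity)
      hsub.eventuallyLE).trans_eq (h₂ x _ (by positivity))
  calc ∫ y in ball 0 ‖x‖, ‖y‖ ^ (-a) * ‖x - y‖ ^ (-b)
      ≤ ∫ y in ball 0 ‖x‖,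
          ((‖x‖ / 2) ^ (-b) * ‖y‖ ^ (-a) + (‖x‖ / 2) ^ (-a) * ‖x - y‖ ^ (-b)) :=
        integral_mono (integrableOn_norm_rpow_mul_norm_sub_rpow ha han hb hbn hx)
          ((hzero_int.const_mul _).add ((hx_int.mono_set hsub).const_mul _))
          fun y => norm_rpow_mul_norm_sub_rpow_le ha hb hx y
    _ = (‖x‖ / 2) ^ (-b) * (C₁ * ‖x‖ ^ ((finrank ℝ E : ℝ) - a)) +
          (‖x‖ / 2) ^ (-a) * ∫ y in ball 0 ‖x‖, ‖x - y‖ ^ (-b) := by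
        rw [integral_add (hzero_int.const_mul _) ((hx_int.mono_set hsub).const_mul _),
          integral_const_mul, integral_const_mul, hzero]
    _ ≤ (‖x‖ / 2) ^ (-b) * (C₁ * ‖x‖ ^ ((finrank ℝ E : ℝ) - a)) +
          (‖x‖ / 2) ^ (-a) * (C₂ * (2 * ‖x‖) ^ ((finrank ℝ E : ℝ) - b)) := by gcongr
    _ = _ := by
        rw [div_eq_mul_one_div, Real.mul_rpow hr.le (by norm_num),
          Real.mul_rpow hr.le (by norm_num), Real.mul_rpow (by norm_num) hr.le,
          show (finrank ℝ E : ℝ) - a - b = -a + (finrank ℝ E - b) by ring, Real.rpow_add hr,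
          show (finrank ℝ E : ℝ) - a = -a + (finrank ℝ E - b) + b by ring, Real.rpow_add hr,
          Real.rpow_add hr, Real.rpow_neg hr.le b]
        field_simp

end SingularIntegral

section Inversion

open EuclideanGeometry Module

variable {E : Type*} [NormedAddCommGroup E] {x y : E} {z : ℝ}

/-- The punctured closed ball of radius `z ‖x‖` about the origin. -/
def innerSet (x : E) (z : ℝ) : Set E := {y | y ≠ 0 ∧ ‖y‖ ≤ z * ‖x‖}

/-- The image of `innerSet x z` under the inversion in the sphere of radius `‖x‖`. -/
def outerSet (x : E) (z : ℝ) : Set E := {y | ‖x‖ ≤ z * ‖y‖}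

lemma innerSet_subset_ball (hx : x ≠ 0) (hz1 : z < 1) : innerSet x z ⊆ Metric.ball 0 ‖x‖ :=
  fun _ hy => mem_ball_zero_iff.2
    (hy.2.trans_lt (mul_lt_of_lt_one_left (norm_pos_iff.2 hx) hz1))

lemma disjoint_innerSet_outerSet (hz0 : 0 < z) (hz1 : z < 1) :
    Disjoint (innerSet x z) (outerSet x z) := by
  rw [Set.disjoint_left]
  rintro y ⟨hy0, hy⟩ (hy' : ‖x‖ ≤ z * ‖y‖)
  have := norm_pos_iff.2 hy0
  nlinarith [mul_lt_of_lt_one_left this hz1, mul_le_mul_of_nonneg_left hy' hz0.le]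

section Measurable

variable [MeasurableSpace E] [OpensMeasurableSpace E]

lemma measurableSet_innerSet : MeasurableSet (innerSet x z) :=
  (measurableSet_singleton 0).compl.inter (measurableSet_le measurable_norm measurable_const)

lemma measurableSet_outerSet : MeasurableSet (outerSet x z) :=
  measurableSet_le measurable_const (measurable_norm.const_mul z)

end Measurable

variable [InnerProductSpace ℝ E]

lemma norm_inversion_zero (r : ℝ) (y : E) : ‖inversion 0 r y‖ = r ^ 2 / ‖y‖ := by
  simpa only [dist_zero_right] using dist_inversion_center (0 : E) y r

lemma norm_sub_inversion_zero (hx : x ≠ 0) (hy : y ≠ 0) :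
    ‖x - inversion 0 ‖x‖ y‖ = ‖x‖ / ‖y‖ * ‖x - y‖ := by
  have hfix : inversion (0 : E) ‖x‖ x = x := by
    simpa using inversion_dist_center (0 : E) x
  have hdist := dist_inversion_inversion hx hy ‖x‖
  rw [hfix, dist_zero_right, dist_zero_right, dist_eq_norm, dist_eq_norm] at hdist
  have := norm_pos_iff.2 hx
  rw [hdist]
  field_simp

lemma image_inversion_innerSet (hx : x ≠ 0) :
    inversion 0 ‖x‖ '' innerSet x z = outerSet x z := by
  have hx' := norm_pos_iff.2 hx
  ext y
  constructor
  · rintro ⟨w, ⟨hw0, hw⟩, rfl⟩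
    rw [outerSet, mem_ofPred, norm_inversion_zero, mul_div_assoc', le_div_iff₀ (norm_pos_iff.2 hw0)]
    nlinarith
  · rintro (hy : ‖x‖ ≤ z * ‖y‖)
    have hy0 : y ≠ 0 := by
      rintro rfl
      rw [norm_zero, mul_zero] at hy
      exact hx'.not_ge hy
    have hy0' := norm_pos_iff.2 hy0
    refine ⟨inversion 0 ‖x‖ y, ⟨?_, ?_⟩, inversion_inversion _ hx'.ne' _⟩
    · rw [← norm_pos_iff, norm_inversion_zero]
      positivity
    · rw [norm_inversion_zero, div_le_iff₀ hy0']
      nlinarith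

variable [FiniteDimensional ℝ E]

lemma abs_det_smul_reflection (c : ℝ) (K : Submodule ℝ E) :
    |(c • (K.reflection : E →L[ℝ] E)).det| = |c| ^ finrank ℝ E := by
  have hdet : (c • (K.reflection : E →L[ℝ] E)).det =
      c ^ finrank ℝ E * LinearMap.det K.reflection.toLinearMap :=
    LinearMap.det_smul c K.reflection.toLinearMap
  rw [hdet, Submodule.det_reflection, abs_mul, abs_pow, abs_pow, abs_neg, abs_one, one_pow, mul_one]

lemma abs_det_fderiv_inversion_zero (r : ℝ) (y : E) :
    |((r / dist y 0) ^ 2 • ((ℝ ∙ (y - 0))ᗮ.reflection : E →L[ℝ] E)).det| =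
      (r / ‖y‖) ^ (2 * finrank ℝ E) := by
  rw [abs_det_smul_reflection, dist_zero_right, abs_sq, pow_mul]

variable [MeasureSpace E] [BorelSpace E] [(volume : Measure E).IsAddHaarMeasure]

lemma integral_outerSet (hx : x ≠ 0) (f : E → ℝ) :
    ∫ y in outerSet x z, f y =
      ∫ y in innerSet x z, (‖x‖ / ‖y‖) ^ (2 * finrank ℝ E) * f (inversion 0 ‖x‖ y) := by
  rw [← image_inversion_innerSet hx, integral_image_eq_integral_abs_det_fderiv_smul volume
    measurableSet_innerSet (fun y hy => (hasFDerivAt_inversion hy.1).hasFDerivWithinAt)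
    (inversion_injective _ (norm_ne_zero_iff.2 hx)).injOn]
  simp only [abs_det_fderiv_inversion_zero, smul_eq_mul]

lemma integrableOn_outerSet_iff (hx : x ≠ 0) (f : E → ℝ) :
    IntegrableOn f (outerSet x z) ↔
      IntegrableOn (fun y => (‖x‖ / ‖y‖) ^ (2 * finrank ℝ E) * f (inversion 0 ‖x‖ y))
        (innerSet x z) := by
  rw [← image_inversion_innerSet hx, integrableOn_image_iff_integrableOn_abs_det_fderiv_smul volume
    measurableSet_innerSet (fun y hy => (hasFDerivAt_inversion hy.1).hasFDerivWithinAt)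
    (inversion_injective _ (norm_ne_zero_iff.2 hx)).injOn]
  simp only [abs_det_fderiv_inversion_zero, smul_eq_mul]

lemma integral_innerSet_union_outerSet (hx : x ≠ 0) (hz0 : 0 < z) (hz1 : z < 1) {f : E → ℝ}
    (hf : IntegrableOn f (innerSet x z ∪ outerSet x z)) :
    ∫ y in innerSet x z ∪ outerSet x z, f y =
      ∫ y in innerSet x z,
        (f y + (‖x‖ / ‖y‖) ^ (2 * finrank ℝ E) * f (inversion 0 ‖x‖ y)) := by
  have houter := hf.mono_set subset_union_right
  rw [setIntegral_union (disjoint_innerSet_outerSet hz0 hz1) measurableSet_outerSet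
    (hf.mono_set subset_union_left) houter, integral_outerSet hx,
    ← integral_add (hf.mono_set subset_union_left) ((integrableOn_outerSet_iff hx f).1 houter)]

end Inversion

section Superharmonicity

open Metric EuclideanGeometry Module

variable {E : Type*} [NormedAddCommGroup E] {Φ e : ℝ → ℝ} {a p q s z : ℝ} {x y : E}

/-- The integrand of the fractional Laplacian of order `p - finrank ℝ E` of the radial function with
profile `Φ`. -/
def radialQuotient (Φ : ℝ → ℝ) (p : ℝ) (x y : E) : ℝ := (Φ ‖x‖ - Φ ‖y‖) / ‖x - y‖ ^ p

lemma one_sub_norm_div_sq_le (hx : x ≠ 0) (hyx : ‖y‖ < ‖x‖) (hq0 : 0 ≤ q) (hq2 : q ≤ 2) :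
    (1 - ‖y‖ / ‖x‖) ^ 2 ≤ ‖x‖ ^ (-q) * ‖x - y‖ ^ q := by
  have hx' := norm_pos_iff.2 hx
  have hlt : ‖y‖ / ‖x‖ < 1 := (div_lt_one hx').2 hyx
  have hle : 1 - ‖y‖ / ‖x‖ ≤ ‖x - y‖ / ‖x‖ := by
    rw [one_sub_div hx'.ne']
    gcongr
    exact norm_sub_norm_le x y
  calc (1 - ‖y‖ / ‖x‖) ^ 2 = (1 - ‖y‖ / ‖x‖) ^ (2 : ℝ) := by norm_num
    _ ≤ (1 - ‖y‖ / ‖x‖) ^ q := Real.rpow_le_rpow_of_exponent_ge (by linarith)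
        (sub_le_self _ (div_nonneg (norm_nonneg y) hx'.le)) hq2
    _ ≤ (‖x - y‖ / ‖x‖) ^ q := Real.rpow_le_rpow (by linarith) hle hq0
    _ = ‖x‖ ^ (-q) * ‖x - y‖ ^ q := by
      rw [Real.div_rpow (norm_nonneg _) hx'.le, Real.rpow_neg hx'.le, div_eq_inv_mul]

variable [InnerProductSpace ℝ E]

lemma weight_mul_radialQuotient_inversion (hp : a + p = 2 * finrank ℝ E) (hx : x ≠ 0)
    (hy : y ≠ 0) :
    (‖x‖ / ‖y‖) ^ (2 * finrank ℝ E) * radialQuotient Φ p x (inversion 0 ‖x‖ y) =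
      (‖y‖ / ‖x‖) ^ (-a) * (Φ ‖x‖ - Φ (‖x‖ / (‖y‖ / ‖x‖))) / ‖x - y‖ ^ p := by
  have hratio : 0 < ‖x‖ / ‖y‖ := by positivity
  have hweight : (‖x‖ / ‖y‖) ^ (2 * finrank ℝ E) / (‖x‖ / ‖y‖) ^ p = (‖y‖ / ‖x‖) ^ (-a) := by
    rw [← inv_div ‖x‖ ‖y‖, Real.inv_rpow hratio.le, ← Real.rpow_neg hratio.le, neg_neg,
      ← Real.rpow_natCast, ← Real.rpow_sub hratio]
    congr 1
    push_cast
    linarith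
  rw [radialQuotient, norm_sub_inversion_zero hx hy, norm_inversion_zero,
    Real.mul_rpow hratio.le (norm_nonneg _), ← hweight, div_div_eq_mul_div, ← sq]
  field_simp

lemma PairingBound.neg_le_radialQuotient_add (hΦ : PairingBound a e Φ)
    (hp : a + p = 2 * finrank ℝ E) (he : 0 ≤ e ‖x‖) (hq0 : 0 ≤ q) (hq2 : q ≤ 2) (hx : x ≠ 0)
    (hy : y ≠ 0) (hyx : ‖y‖ < ‖x‖) :
    -(e ‖x‖ * ‖x‖ ^ (a - q) * (‖y‖ ^ (-a) * ‖x - y‖ ^ (-(p - q)))) ≤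
      radialQuotient Φ p x y +
        (‖x‖ / ‖y‖) ^ (2 * finrank ℝ E) * radialQuotient Φ p x (inversion 0 ‖x‖ y) := by
  have hx' := norm_pos_iff.2 hx
  have hy' := norm_pos_iff.2 hy
  have hxy : 0 < ‖x - y‖ := by linarith [norm_sub_norm_le x y]
  have hpair := hΦ hx' (div_pos hy' hx') ((div_lt_one hx').2 hyx)
  rw [mul_div_cancel₀ _ hx'.ne'] at hpair
  rw [weight_mul_radialQuotient_inversion hp hx hy, radialQuotient, ← add_div,
    le_div_iff₀ (by positivity)]
  refine le_trans ?_ hpair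
  rw [neg_mul, neg_le_neg_iff]
  calc e ‖x‖ * ((‖y‖ / ‖x‖) ^ (-a) * (1 - ‖y‖ / ‖x‖) ^ 2)
      ≤ e ‖x‖ * ((‖y‖ / ‖x‖) ^ (-a) * (‖x‖ ^ (-q) * ‖x - y‖ ^ q)) := by
        gcongr
        exact one_sub_norm_div_sq_le hx hyx hq0 hq2
    _ = _ := by
        rw [Real.div_rpow hy'.le hx'.le, Real.rpow_neg hx'.le a, div_inv_eq_mul,
          sub_eq_add_neg a, Real.rpow_add hx', neg_sub, Real.rpow_sub hxy]
        field_simp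

variable [FiniteDimensional ℝ E] [MeasureSpace E] [BorelSpace E]
  [(volume : Measure E).IsAddHaarMeasure]

lemma PairingBound.neg_le_integral_radialQuotient (hΦ : PairingBound a e Φ)
    (hp : a + p = 2 * finrank ℝ E) (he : 0 ≤ e ‖x‖) (hq0 : 0 ≤ q) (hq2 : q ≤ 2) (hx : x ≠ 0)
    (hz : 0 < z) (hz1 : z < 1)
    (hker : IntegrableOn (fun y => ‖y‖ ^ (-a) * ‖x - y‖ ^ (-(p - q))) (ball 0 ‖x‖))
    (hint : IntegrableOn (radialQuotient Φ p x) (innerSet x z ∪ outerSet x z)) :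
    -(e ‖x‖ * ‖x‖ ^ (a - q) * ∫ y in ball 0 ‖x‖, ‖y‖ ^ (-a) * ‖x - y‖ ^ (-(p - q))) ≤
      ∫ y in innerSet x z ∪ outerSet x z, radialQuotient Φ p x y := by
  have hsub := innerSet_subset_ball hx hz1
  have houter := (integrableOn_outerSet_iff hx _).1 (hint.mono_set subset_union_right)
  have hc : 0 ≤ e ‖x‖ * ‖x‖ ^ (a - q) := by positivity
  calc -(e ‖x‖ * ‖x‖ ^ (a - q) * ∫ y in ball 0 ‖x‖, ‖y‖ ^ (-a) * ‖x - y‖ ^ (-(p - q)))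
      ≤ -(e ‖x‖ * ‖x‖ ^ (a - q) *
          ∫ y in innerSet x z, ‖y‖ ^ (-a) * ‖x - y‖ ^ (-(p - q))) :=
        neg_le_neg (mul_le_mul_of_nonneg_left (setIntegral_mono_set hker
          (Eventually.of_forall fun y => by positivity) hsub.eventuallyLE) hc)
    _ ≤ _ := by
        rw [integral_innerSet_union_outerSet hx hz hz1 hint, ← integral_const_mul, ← integral_neg]
        exact setIntegral_mono_on ((hker.mono_set hsub).const_mul _).neg
          ((hint.mono_set subset_union_left).add houter) measurableSet_innerSet fun y hy =>
            hΦ.neg_le_radialQuotient_add hp he hq0 hq2 hx hy.1 (mem_ball_zero_iff.1 (hsub hy))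

lemma exists_neg_le_integral_radialQuotient (hs0 : 0 < s) (hs1 : s < 1)
    (hsn : 2 * s ≤ finrank ℝ E) :
    ∃ C, 0 ≤ C ∧ ∀ {e Φ : ℝ → ℝ} {z : ℝ} {x : E}, PairingBound (finrank ℝ E - 2 * s) e Φ →
      0 ≤ e ‖x‖ → x ≠ 0 → 0 < z → z < 1 →
      IntegrableOn (radialQuotient Φ (finrank ℝ E + 2 * s) x) (innerSet x z ∪ outerSet x z) →
      -(C * (e ‖x‖ * ‖x‖ ^ (-(2 * s)))) ≤
        ∫ y in innerSet x z ∪ outerSet x z, radialQuotient Φ (finrank ℝ E + 2 * s) x y := by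
  set n := finrank ℝ E
  have hn : 0 < n := by exact_mod_cast (by linarith : (0 : ℝ) < n)
  have hn1 : (1 : ℝ) ≤ n := by exact_mod_cast hn
  have := nontrivial_of_finrank_pos hn
  have ha : 0 ≤ (n : ℝ) - 2 * s := by linarith
  have han : (n : ℝ) - 2 * s < n := by linarith
  have hb : 0 ≤ (n : ℝ) + 2 * s - (1 + s) := by linarith
  have hbn : (n : ℝ) + 2 * s - (1 + s) < n := by linarith
  obtain ⟨C, hC, hbound⟩ := exists_integral_norm_rpow_mul_norm_sub_rpow_le (E := E) ha han hb hbn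
  refine ⟨C, hC, fun {e Φ z x} hΦ he hx hz hz1 hint => ?_⟩
  calc -(C * (e ‖x‖ * ‖x‖ ^ (-(2 * s))))
      = -(e ‖x‖ * ‖x‖ ^ ((n : ℝ) - 2 * s - (1 + s)) *
          (C * ‖x‖ ^ ((n : ℝ) - (n - 2 * s) - (n + 2 * s - (1 + s))))) := by
        rw [show -(2 * s) = (n : ℝ) - 2 * s - (1 + s) +
          (n - (n - 2 * s) - (n + 2 * s - (1 + s))) by ring, Real.rpow_add (norm_pos_iff.2 hx)]
        ring
    _ ≤ -(e ‖x‖ * ‖x‖ ^ ((n : ℝ) - 2 * s - (1 + s)) *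
          ∫ y in ball 0 ‖x‖, ‖y‖ ^ (-((n : ℝ) - 2 * s)) *
            ‖x - y‖ ^ (-((n : ℝ) + 2 * s - (1 + s)))) := by
        gcongr
        exact hbound x hx
    _ ≤ _ := hΦ.neg_le_integral_radialQuotient (by ring) he (by linarith) (by linarith) hx hz hz1
        (integrableOn_norm_rpow_mul_norm_sub_rpow ha han hb hbn hx) hint

end Superharmonicity

section SeparatedPairs

variable {E : Type*} [NormedAddCommGroup E] {Φ : ℝ → ℝ} {p q R η : ℝ} {x y : E}

/-- The pairs of nonzero points whose norms have ratio at most `1 - η`, the larger one being at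
least `η`. For `0 < η` these sets exclude the singularities of the Gagliardo kernel, and they
exhaust almost all pairs as `η → 0`. -/
def separatedPairs (E : Type*) [NormedAddCommGroup E] (η : ℝ) : Set (E × E) :=
  {p | 0 < min ‖p.1‖ ‖p.2‖ ∧ η ≤ max ‖p.1‖ ‖p.2‖ ∧
    min ‖p.1‖ ‖p.2‖ ≤ (1 - η) * max ‖p.1‖ ‖p.2‖}

lemma separatedPairs_anti : Antitone (separatedPairs E) := fun η η' h p ⟨hpos, hle, hratio⟩ =>
  ⟨hpos, h.trans hle, hratio.trans (by gcongr)⟩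

lemma swap_preimage_separatedPairs (η : ℝ) :
    Prod.swap ⁻¹' separatedPairs E η = separatedPairs E η := by
  ext p
  simp only [separatedPairs, mem_preimage, mem_ofPred_eq, Prod.fst_swap, Prod.snd_swap,
    min_comm ‖p.2‖, max_comm ‖p.2‖]

lemma exists_mem_separatedPairs (hx : x ≠ 0) (hy : y ≠ 0) (hxy : ‖y‖ ≠ ‖x‖) :
    ∃ η₀ > 0, ∀ η ≤ η₀, (x, y) ∈ separatedPairs E η := by
  have hpos : 0 < min ‖x‖ ‖y‖ := lt_min (norm_pos_iff.2 hx) (norm_pos_iff.2 hy)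
  have hmax : 0 < max ‖x‖ ‖y‖ := lt_max_of_lt_left (norm_pos_iff.2 hx)
  have hratio : min ‖x‖ ‖y‖ / max ‖x‖ ‖y‖ < 1 := (div_lt_one hmax).2 (min_lt_max.2 hxy.symm)
  refine ⟨min (max ‖x‖ ‖y‖) (1 - min ‖x‖ ‖y‖ / max ‖x‖ ‖y‖), by simp [hmax, hratio],
    fun η hη => ⟨hpos, hη.trans (min_le_left _ _), (div_le_iff₀ hmax).1 ?_⟩⟩
  linarith [hη.trans (min_le_right _ _)]

lemma mul_max_le_norm_sub (h : (x, y) ∈ separatedPairs E η) :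
    η * max ‖x‖ ‖y‖ ≤ ‖x - y‖ := by
  have habs := abs_norm_sub_norm_le x y
  rw [← max_sub_min_eq_abs'] at habs
  linarith [h.2.2]

lemma one_add_norm_mul_le (hη : 0 < η) (h : (x, y) ∈ separatedPairs E η)
    (hR : min ‖x‖ ‖y‖ ≤ R) :
    (1 + ‖x‖) * (1 + ‖y‖) ≤ (1 + R) * (1 + η) / η ^ 2 * ‖x - y‖ := by
  have hmin : 0 < min ‖x‖ ‖y‖ := h.1
  have hmax : η ≤ max ‖x‖ ‖y‖ := h.2.1
  calc (1 + ‖x‖) * (1 + ‖y‖) = (1 + min ‖x‖ ‖y‖) * (1 + max ‖x‖ ‖y‖) := by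
        linarith [min_mul_max ‖x‖ ‖y‖, min_add_max ‖x‖ ‖y‖]
    _ ≤ (1 + R) * (max ‖x‖ ‖y‖ / η + max ‖x‖ ‖y‖) := by
        gcongr
        · linarith
        · exact (one_le_div hη).2 hmax
    _ = (1 + R) * (1 + η) / η ^ 2 * (η * max ‖x‖ ‖y‖) := by
        field_simp
    _ ≤ _ := by
        gcongr
        · have : 0 < R := hmin.trans_le hR
          positivity
        · exact mul_max_le_norm_sub h

lemma abs_radialQuotient_le (hanti : AntitoneOn Φ (Ici 0)) (hR : 0 ≤ R)
    (hzero : ∀ r, R ≤ r → Φ r = 0) (hq : 0 ≤ q) (hqp : q ≤ p) (hη : 0 < η)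
    (h : (x, y) ∈ separatedPairs E η) :
    |radialQuotient Φ p x y| ≤ Φ 0 * ((1 + R) * (1 + η) / η ^ 2) ^ p *
      ((1 + ‖x‖) ^ (-q) * (1 + ‖y‖) ^ (-p)) := by
  set K := (1 + R) * (1 + η) / η ^ 2
  have hle (r : ℝ) (hr : 0 ≤ r) : Φ r ≤ Φ 0 := hanti self_mem_Ici hr hr
  have hnonneg (r : ℝ) (hr : 0 ≤ r) : 0 ≤ Φ r :=
    (hzero _ (le_max_left R r)).symm.le.trans
      (hanti hr (hr.trans (le_max_right R r)) (le_max_right R r))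
  have hΦ0 := hnonneg 0 le_rfl
  rcases le_or_gt (min ‖x‖ ‖y‖) R with hmin | hmin
  · have hxy : 0 < ‖x - y‖ :=
      (mul_pos hη (hη.trans_le h.2.1)).trans_le (mul_max_le_norm_sub h)
    have hker : (‖x - y‖ ^ p)⁻¹ ≤ K ^ p * ((1 + ‖x‖) ^ (-q) * (1 + ‖y‖) ^ (-p)) := by
      calc (‖x - y‖ ^ p)⁻¹ = K ^ p * (K * ‖x - y‖) ^ (-p) := by
            rw [Real.mul_rpow (by positivity) hxy.le, ← mul_assoc,
              ← Real.rpow_add (by positivity), add_neg_cancel, Real.rpow_zero, one_mul,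
              Real.rpow_neg hxy.le]
        _ ≤ K ^ p * ((1 + ‖x‖) * (1 + ‖y‖)) ^ (-p) := by
            gcongr ?_ * ?_
            exact Real.rpow_le_rpow_of_nonpos (by positivity) (one_add_norm_mul_le hη h hmin)
              (neg_nonpos.2 (hq.trans hqp))
        _ = K ^ p * ((1 + ‖x‖) ^ (-p) * (1 + ‖y‖) ^ (-p)) := by
            rw [Real.mul_rpow (by positivity) (by positivity)]
        _ ≤ _ := by
            gcongr
            linarith [norm_nonneg x]
    rw [radialQuotient, abs_div, abs_of_pos (by positivity : 0 < ‖x - y‖ ^ p), div_eq_mul_inv,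
      mul_assoc]
    gcongr
    rw [abs_le]
    constructor <;> linarith [hle _ (norm_nonneg x), hle _ (norm_nonneg y),
      hnonneg _ (norm_nonneg x), hnonneg _ (norm_nonneg y)]
  · rw [radialQuotient, hzero _ (hmin.le.trans (min_le_left _ _)),
      hzero _ (hmin.le.trans (min_le_right _ _)), sub_self, zero_div, abs_zero]
    positivity

lemma radialQuotient_nonneg (hanti : AntitoneOn Φ (Ici 0)) (h : ‖x‖ ≤ ‖y‖) :
    0 ≤ radialQuotient Φ p x y :=
  div_nonneg (sub_nonneg.2 (hanti (norm_nonneg x) (norm_nonneg y) h)) (by positivity)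

lemma prodMk_preimage_separatedPairs (hη : 0 < η) (hx : x ≠ 0) (hηx : η ≤ ‖x‖) :
    Prod.mk x ⁻¹' separatedPairs E η = innerSet x (1 - η) ∪ outerSet x (1 - η) := by
  have hx' := norm_pos_iff.2 hx
  ext y
  simp only [separatedPairs, innerSet, outerSet, mem_preimage, mem_union, mem_ofPred_eq, lt_min_iff,
    norm_pos_iff, le_max_of_le_left hηx, hx, ne_eq, not_false_eq_true, true_and]
  rcases le_total ‖x‖ ‖y‖ with h | h
  · have hy : y ≠ 0 := norm_pos_iff.1 (hx'.trans_le h)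
    simp only [hy, min_eq_left h, max_eq_right h, not_false_eq_true, true_and]
    exact ⟨Or.inr, fun hor => hor.elim (fun hle => by nlinarith) id⟩
  · simp only [min_eq_right h, max_eq_left h]
    refine ⟨Or.inl, fun hor => hor.elim id fun hle => ?_⟩
    have hy : 0 < ‖y‖ := (norm_nonneg y).lt_of_ne' (right_ne_zero_of_mul (hx'.trans_le hle).ne')
    nlinarith

section Measurable

variable [MeasurableSpace E] [BorelSpace E]

lemma measurableSet_separatedPairs [SecondCountableTopology E] (η : ℝ) :
    MeasurableSet (separatedPairs E η) := by
  have hmin : Measurable fun p : E × E => min ‖p.1‖ ‖p.2‖ := by fun_prop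
  have hmax : Measurable fun p : E × E => max ‖p.1‖ ‖p.2‖ := by fun_prop
  exact (measurableSet_lt measurable_const hmin).inter
    ((measurableSet_le measurable_const hmax).inter
      (measurableSet_le hmin (hmax.const_mul _)))

lemma measurable_radialQuotient [SecondCountableTopology E] (hΦ : Measurable Φ) (p : ℝ) :
    Measurable fun z : E × E => radialQuotient Φ p z.1 z.2 := by
  unfold radialQuotient
  fun_prop

end Measurable

end SeparatedPairs

section SpatialPairing

open Metric Module

lemma setIntegral_add_comp_swap {α : Type*} [MeasureSpace α] [SFinite (volume : Measure α)]
    {S : Set (α × α)} (hS : Prod.swap ⁻¹' S = S) {f : α × α → ℝ} (hf : IntegrableOn f S) :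
    ∫ z in S, (f z + f z.swap) = 2 * ∫ z in S, f z := by
  have hswap : MeasurePreserving (Prod.swap : α × α → α × α) volume volume :=
    Measure.measurePreserving_swap
  have hemb : MeasurableEmbedding (Prod.swap : α × α → α × α) :=
    MeasurableEquiv.prodComm.measurableEmbedding
  have hint := hswap.setIntegral_preimage_emb hemb f S
  have hf' : IntegrableOn (fun z => f z.swap) (Prod.swap ⁻¹' S) :=
    (hswap.integrableOn_comp_preimage hemb).2 hf
  rw [hS] at hint hf'
  rw [integral_add hf hf', hint, two_mul]

variable {E : Type*} [NormedAddCommGroup E] [InnerProductSpace ℝ E] [FiniteDimensional ℝ E]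
  [MeasureSpace E] [BorelSpace E] [(volume : Measure E).IsAddHaarMeasure]
  {Φ : ℝ → ℝ} {v : E → ℝ} {p s R η : ℝ}

lemma ae_ne_and_norm_ne [Nontrivial E] :
    ∀ᵐ p : E × E, p.1 ≠ 0 ∧ p.2 ≠ 0 ∧ ‖p.2‖ ≠ ‖p.1‖ := by
  have hne : ∀ᵐ x : E, x ≠ 0 := Measure.ae_ne volume 0
  rw [Measure.volume_eq_prod, Measure.ae_prod_iff_ae_ae]
  · filter_upwards [hne] with x hx
    have hsphere : ∀ᵐ y : E, y ∉ sphere 0 ‖x‖ := measure_eq_zero_iff_ae_notMem.1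
      (Measure.addHaar_sphere_of_ne_zero volume 0 (norm_ne_zero_iff.2 hx))
    filter_upwards [hne, hsphere] with y hy hxy using ⟨hx, hy, by simpa using hxy⟩
  · have hfst : Measurable fun p : E × E => ‖p.1‖ := by fun_prop
    have hsnd : Measurable fun p : E × E => ‖p.2‖ := by fun_prop
    exact ((measurableSet_singleton 0).compl.preimage measurable_fst).inter
      (((measurableSet_singleton 0).compl.preimage measurable_snd).inter
        (measurableSet_eq_fun hsnd hfst).compl)

lemma ae_mem_iUnion_separatedPairs [Nontrivial E] {η : ℕ → ℝ} (hη : Tendsto η atTop (𝓝 0)) :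
    ∀ᵐ p : E × E, p ∈ ⋃ n, separatedPairs E (η n) := by
  filter_upwards [ae_ne_and_norm_ne] with p ⟨hx, hy, hxy⟩
  obtain ⟨η₀, hη₀, hmem⟩ := exists_mem_separatedPairs hx hy hxy
  obtain ⟨n, hn⟩ := (hη.eventually_le_const hη₀).exists
  exact mem_iUnion.2 ⟨n, hmem _ hn⟩

lemma integrableOn_mul_radialQuotient (hΦm : Measurable Φ) (hanti : AntitoneOn Φ (Ici 0))
    (hR : 0 ≤ R) (hzero : ∀ r, R ≤ r → Φ r = 0) (hp : finrank ℝ E < p) (hη : 0 < η)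
    (hv : Measurable v) (hvi : Integrable fun x => v x * (1 + ‖x‖) ^ (-(finrank ℝ E : ℝ))) :
    IntegrableOn (fun z : E × E => v z.1 * radialQuotient Φ p z.1 z.2) (separatedPairs E η) := by
  have hprod : Integrable fun z : E × E =>
      v z.1 * (1 + ‖z.1‖) ^ (-(finrank ℝ E : ℝ)) * (1 + ‖z.2‖) ^ (-p) :=
    hvi.mul_prod (integrable_one_add_norm hp)
  refine Integrable.mono'
    (hprod.norm.const_mul (Φ 0 * ((1 + R) * (1 + η) / η ^ 2) ^ p)).integrableOn
    ((hv.comp measurable_fst).mul (measurable_radialQuotient hΦm p)).aestronglyMeasurable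
    ((ae_restrict_iff' (measurableSet_separatedPairs η)).2 (Eventually.of_forall fun z hz => ?_))
  rw [norm_mul, norm_mul, norm_mul,
    Real.norm_of_nonneg (by positivity : 0 ≤ (1 + ‖z.1‖) ^ (-(finrank ℝ E : ℝ))),
    Real.norm_of_nonneg (by positivity : 0 ≤ (1 + ‖z.2‖) ^ (-p))]
  calc ‖v z.1‖ * ‖radialQuotient Φ p z.1 z.2‖
      ≤ ‖v z.1‖ * (Φ 0 * ((1 + R) * (1 + η) / η ^ 2) ^ p *
          ((1 + ‖z.1‖) ^ (-(finrank ℝ E : ℝ)) * (1 + ‖z.2‖) ^ (-p))) := by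
        gcongr
        exact abs_radialQuotient_le hanti hR hzero (Nat.cast_nonneg _) hp.le hη hz
    _ = _ := by ring

lemma exists_neg_le_integral_section (hs0 : 0 < s) (hs1 : s < 1) (hsn : 2 * s ≤ finrank ℝ E) :
    ∃ C, 0 ≤ C ∧ ∀ {Φ e : ℝ → ℝ}, AntitoneOn Φ (Ici 0) →
      PairingBound (finrank ℝ E - 2 * s) e Φ → ∀ {η : ℝ}, 0 < η → η < 1 → ∀ {x : E}, x ≠ 0 →
      0 ≤ e ‖x‖ → IntegrableOn (radialQuotient Φ (finrank ℝ E + 2 * s) x)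
        (Prod.mk x ⁻¹' separatedPairs E η) →
      -(C * (e ‖x‖ * ‖x‖ ^ (-(2 * s)))) ≤
        ∫ y in Prod.mk x ⁻¹' separatedPairs E η, radialQuotient Φ (finrank ℝ E + 2 * s) x y := by
  obtain ⟨C, hC, hbound⟩ := exists_neg_le_integral_radialQuotient (E := E) hs0 hs1 hsn
  refine ⟨C, hC, fun {Φ e} hanti hΦ {η} hη hη1 {x} hx he hint => ?_⟩
  rcases le_or_gt η ‖x‖ with hηx | hηx
  · rw [prodMk_preimage_separatedPairs hη hx hηx] at hint ⊢
    exact hbound hΦ he hx (by linarith) (by linarith) hint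
  · have hnonneg : 0 ≤ C * (e ‖x‖ * ‖x‖ ^ (-(2 * s))) := by positivity
    refine (neg_nonpos.2 hnonneg).trans (setIntegral_nonneg
      (measurable_prodMk_left (measurableSet_separatedPairs η)) fun y hy => ?_)
    refine radialQuotient_nonneg hanti (hηx.le.trans ?_)
    exact (le_max_iff.1 hy.2.1).resolve_left hηx.not_ge

lemma exists_neg_le_setIntegral_mul_radialQuotient (hs0 : 0 < s) (hs1 : s < 1)
    (hsn : 2 * s ≤ finrank ℝ E) :
    ∃ C, 0 ≤ C ∧ ∀ {Φ e : ℝ → ℝ}, AntitoneOn Φ (Ici 0) →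
      PairingBound (finrank ℝ E - 2 * s) e Φ → (∀ r, 0 ≤ e r) → ∀ {η : ℝ}, 0 < η → η < 1 →
      ∀ {v : E → ℝ}, (∀ x, 0 ≤ v x) → Integrable (fun x => v x * (e ‖x‖ * ‖x‖ ^ (-(2 * s)))) →
      IntegrableOn (fun z : E × E => v z.1 * radialQuotient Φ (finrank ℝ E + 2 * s) z.1 z.2)
        (separatedPairs E η) →
      -(C * ∫ x, v x * (e ‖x‖ * ‖x‖ ^ (-(2 * s)))) ≤ ∫ z in separatedPairs E η,
        v z.1 * radialQuotient Φ (finrank ℝ E + 2 * s) z.1 z.2 := by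
  obtain ⟨C, hC, hbound⟩ := exists_neg_le_integral_section (E := E) hs0 hs1 hsn
  refine ⟨C, hC, fun {Φ e} hanti hΦ he {η} hη hη1 {v} hv0 hve hint => ?_⟩
  have : Nontrivial E := nontrivial_of_finrank_pos
    (by exact_mod_cast (by linarith : (0 : ℝ) < finrank ℝ E))
  have hS := measurableSet_separatedPairs (E := E) η
  have hSx (x : E) : MeasurableSet (Prod.mk x ⁻¹' separatedPairs E η) := measurable_prodMk_left hS
  have hind := hint.integrable_indicator hS
  rw [Measure.volume_eq_prod] at hind
  rw [← integral_indicator hS, Measure.volume_eq_prod, integral_prod _ hind,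
    ← integral_const_mul, ← integral_neg]
  refine integral_mono_ae (hve.const_mul C).neg hind.integral_prod_left ?_
  filter_upwards [Measure.ae_ne volume (0 : E), hind.prod_right_ae] with x hx hxi
  change Integrable ((Prod.mk x ⁻¹' separatedPairs E η).indicator
    fun y => v x * radialQuotient Φ _ x y) at hxi
  change -(C * (v x * _)) ≤ ∫ y, (Prod.mk x ⁻¹' separatedPairs E η).indicator
    (fun y => v x * radialQuotient Φ _ x y) y
  rw [integrable_indicator_iff (hSx x)] at hxi
  rw [integral_indicator (hSx x), integral_const_mul]
  rcases (hv0 x).eq_or_lt with h0 | h0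
  · simp [← h0]
  · have hxi' := (integrable_const_mul_iff h0.ne'.isUnit _).1 hxi
    calc -(C * (v x * (e ‖x‖ * ‖x‖ ^ (-(2 * s)))))
        = v x * -(C * (e ‖x‖ * ‖x‖ ^ (-(2 * s)))) := by ring
      _ ≤ _ := mul_le_mul_of_nonneg_left (hbound hanti hΦ hη hη1 hx (he _) hxi') h0.le

lemma le_integral_of_forall_le_setIntegral_separatedPairs [Nontrivial E] {f : E × E → ℝ} {c : ℝ}
    (hf : Integrable f)
    (hc : ∀ η : ℝ, 0 < η → η < 1 → c ≤ ∫ z in separatedPairs E η, f z) : c ≤ ∫ z, f z := by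
  set η : ℕ → ℝ := fun n => 1 / (n + 1 + 1)
  have hη_anti : Antitone η := fun n k hnk => by
    simp only [η]
    gcongr
  have hη_tendsto : Tendsto η atTop (𝓝 0) := by
    simpa [η, Function.comp_def] using
      (tendsto_one_div_add_atTop_nhds_zero_nat (𝕜 := ℝ)).comp (tendsto_add_atTop_nat 1)
  have hlim := tendsto_setIntegral_of_monotone
    (fun n => measurableSet_separatedPairs (E := E) (η n))
    (separatedPairs_anti.comp hη_anti) hf.integrableOn
  rw [Measure.restrict_eq_self_of_ae_mem (ae_mem_iUnion_separatedPairs hη_tendsto)] at hlim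
  refine ge_of_tendsto' hlim fun n => hc _ (by positivity) ((div_lt_one (by positivity)).2 ?_)
  linarith [n.cast_nonneg (α := ℝ)]

lemma exists_neg_le_integral_sub_mul_sub (hs0 : 0 < s) (hs1 : s < 1)
    (hsn : 2 * s ≤ finrank ℝ E) :
    ∃ C, 0 ≤ C ∧ ∀ {Φ e : ℝ → ℝ} {R : ℝ}, Measurable Φ → AntitoneOn Φ (Ici 0) → 0 ≤ R →
      (∀ r, R ≤ r → Φ r = 0) → PairingBound (finrank ℝ E - 2 * s) e Φ → (∀ r, 0 ≤ e r) →
      ∀ {v : E → ℝ}, Measurable v → (∀ x, 0 ≤ v x) →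
      Integrable (fun x => v x * (1 + ‖x‖) ^ (-(finrank ℝ E : ℝ))) →
      Integrable (fun x => v x * (e ‖x‖ * ‖x‖ ^ (-(2 * s)))) →
      -(C * ∫ x, v x * (e ‖x‖ * ‖x‖ ^ (-(2 * s)))) ≤
        ∫ z : E × E, (v z.1 - v z.2) * (Φ ‖z.1‖ - Φ ‖z.2‖) /
          ‖z.1 - z.2‖ ^ (finrank ℝ E + 2 * s) := by
  obtain ⟨C, hC, hbound⟩ := exists_neg_le_setIntegral_mul_radialQuotient (E := E) hs0 hs1 hsn
  refine ⟨2 * C, by positivity,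
    fun {Φ e R} hΦm hanti hR hzero hΦ he {v} hv hv0 hvi hve => ?_⟩
  have : Nontrivial E := nontrivial_of_finrank_pos
    (by exact_mod_cast (by linarith : (0 : ℝ) < finrank ℝ E))
  set G : E × E → ℝ := fun z => v z.1 * radialQuotient Φ (finrank ℝ E + 2 * s) z.1 z.2 with hG
  have hsym (z : E × E) : (v z.1 - v z.2) * (Φ ‖z.1‖ - Φ ‖z.2‖) /
      ‖z.1 - z.2‖ ^ (finrank ℝ E + 2 * s) = G z + G z.swap := by
    simp only [hG, radialQuotient, Prod.fst_swap, Prod.snd_swap, norm_sub_rev z.2 z.1]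
    ring
  simp only [hsym]
  by_cases hint : Integrable fun z => G z + G z.swap
  swap
  · rw [integral_undef hint, Left.neg_nonpos_iff]
    exact mul_nonneg (by positivity) (integral_nonneg fun x =>
      mul_nonneg (hv0 x) (mul_nonneg (he _) (by positivity)))
  refine le_integral_of_forall_le_setIntegral_separatedPairs hint fun η hη hη1 => ?_
  have hGi := integrableOn_mul_radialQuotient hΦm hanti hR hzero
    (by linarith : (finrank ℝ E : ℝ) < finrank ℝ E + 2 * s) hη hv hvi
  rw [setIntegral_add_comp_swap (swap_preimage_separatedPairs η) hGi]
  linarith [hbound hanti hΦ he hη hη1 hv0 hve hGi]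

end SpatialPairing

section GagliardoForm

variable {d : ℕ} {s κ : ℝ} {v w : Ed d → ℝ}

lemma gagliardoE_const_mul (c : ℝ) :
    gagliardoE d s κ v (fun x => c * w x) = c * gagliardoE d s κ v w := by
  simp only [gagliardoE, mul_left_comm c, ← integral_const_mul]
  congr! 3
  ring

lemma gagliardoE_translate (x₀ : Ed d) :
    gagliardoE d s κ v (fun y => w (y - x₀)) = gagliardoE d s κ (fun y => v (y + x₀)) w := by
  have : (volume : Measure (Ed d × Ed d)).IsAddRightInvariant := by
    rw [Measure.volume_eq_prod]
    infer_instance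
  unfold gagliardoE
  rw [← integral_add_right_eq_self _ ((x₀, x₀) : Ed d × Ed d)]
  simp

lemma norm_rpow_neg_le {E : Type*} [NormedAddCommGroup E] {q : ℝ} (hq : 0 ≤ q) {x : E}
    (hx : 1 ≤ ‖x‖) : ‖x‖ ^ (-q) ≤ 2 ^ q * (1 + ‖x‖) ^ (-q) := by
  calc ‖x‖ ^ (-q) ≤ ((1 + ‖x‖) / 2) ^ (-q) :=
        Real.rpow_le_rpow_of_nonpos (by positivity) (by linarith) (by linarith)
    _ = 2 ^ q * (1 + ‖x‖) ^ (-q) := by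
        rw [Real.div_rpow (by positivity) zero_le_two, Real.rpow_neg zero_le_two, div_inv_eq_mul,
          mul_comm]

lemma indicator_rpow_mul_rpow_le {E : Type*} [NormedAddCommGroup E] {K p q R : ℝ} (hK : 0 ≤ K)
    (hpq : 0 ≤ p + q) (hR : 1 ≤ R) (x : E) :
    (Ici R).indicator (fun r => K * r ^ (-p)) ‖x‖ * ‖x‖ ^ (-q) ≤
      {x : E | R ≤ ‖x‖}.indicator (fun x => K * 2 ^ (p + q) * (1 + ‖x‖) ^ (-(p + q))) x := by
  by_cases hx : R ≤ ‖x‖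
  · rw [indicator_of_mem (mem_Ici.2 hx), indicator_of_mem (by exact hx), mul_assoc, mul_assoc,
      ← Real.rpow_add (by linarith), ← neg_add]
    gcongr
    exact norm_rpow_neg_le hpq (hR.trans hx)
  · simp [hx]

lemma exists_neg_le_gagliardoE_profile_norm (hs0 : 0 < s) (hs1 : s < 1) (hd : 2 * s ≤ d) :
    ∃ C, 0 ≤ C ∧ ∀ {κ ε R : ℝ}, 0 ≤ κ → 0 < ε → 1 ≤ R → ∀ {v : Ed d → ℝ}, Measurable v →
      (∀ x, 0 ≤ v x) → Integrable (fun x => v x * (1 + ‖x‖) ^ (-(d : ℝ))) →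
      -(κ * (C * ∫ x in {x | R ≤ ‖x‖}, v x * (1 + ‖x‖) ^ (-(d : ℝ)))) ≤
        gagliardoE d s κ v (fun y => profile ε (d - 2 * s) R ‖y‖) := by
  have ha : 0 ≤ (d : ℝ) - 2 * s := by linarith
  obtain ⟨K, hK, hpair⟩ := exists_profile_pairingBound ha
  obtain ⟨C, hC, hbound⟩ := exists_neg_le_integral_sub_mul_sub (E := Ed d) hs0 hs1
    (by rwa [finrank_euclideanSpace_fin])
  rw [finrank_euclideanSpace_fin] at hbound
  refine ⟨C * (K * 2 ^ (d : ℝ)) / 2, by positivity, fun {κ ε R} hκ hε hR {v} hv hv0 hvi => ?_⟩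
  have hR0 : 0 < R := by linarith
  have hT : MeasurableSet {x : Ed d | R ≤ ‖x‖} := measurableSet_le measurable_const measurable_norm
  set e : ℝ → ℝ := (Ici R).indicator fun r => K * r ^ (-((d : ℝ) - 2 * s))
  have he0 (r : ℝ) : 0 ≤ e r := indicator_nonneg (fun r (hr : R ≤ r) =>
    mul_nonneg hK (Real.rpow_nonneg (hR0.le.trans hr) _)) r
  set V : Ed d → ℝ := {x | R ≤ ‖x‖}.indicator fun x =>
    K * 2 ^ (d : ℝ) * (v x * (1 + ‖x‖) ^ (-(d : ℝ))) with hV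
  have hVi : Integrable V := (hvi.const_mul _).indicator hT
  have hle (x : Ed d) : v x * (e ‖x‖ * ‖x‖ ^ (-(2 * s))) ≤ V x := by
    have := mul_le_mul_of_nonneg_left (indicator_rpow_mul_rpow_le hK
      (by linarith : 0 ≤ (d : ℝ) - 2 * s + 2 * s) hR x) (hv0 x)
    rw [← indicator_mul_right] at this
    simpa only [hV, sub_add_cancel, mul_left_comm] using this
  have hve : Integrable fun x => v x * (e ‖x‖ * ‖x‖ ^ (-(2 * s))) := by
    refine hVi.mono' (Measurable.aestronglyMeasurable ?_) (Eventually.of_forall fun x => ?_)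
    · have hem : Measurable e := Measurable.indicator (by fun_prop) measurableSet_Ici
      fun_prop
    · rw [Real.norm_of_nonneg (mul_nonneg (hv0 x) (mul_nonneg (he0 _) (by positivity)))]
      exact hle x
  have hmain := hbound (measurable_profile ε _ R) (profile_antitoneOn hε ha hR0.le)
    (by positivity) (fun r hr => profile_eq_zero hR0 hr) (hpair ε R hε hR0) he0 hv hv0 hvi hve
  have htail := integral_mono hve hVi hle
  rw [integral_indicator hT, integral_const_mul] at htail
  calc _ = κ / 2 * -(C * (K * 2 ^ (d : ℝ) *
          ∫ x in {x | R ≤ ‖x‖}, v x * (1 + ‖x‖) ^ (-(d : ℝ)))) := by ring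
    _ ≤ _ := by
      refine mul_le_mul_of_nonneg_left (le_trans ?_ hmain) (by positivity)
      exact neg_le_neg (mul_le_mul_of_nonneg_left htail hC)

lemma exists_neg_le_gagliardoE_profile (hs0 : 0 < s) (hs1 : s < 1) (hd : 2 * s ≤ d) :
    ∃ C, 0 ≤ C ∧ ∀ {κ ε R : ℝ}, 0 ≤ κ → 0 < ε → 1 ≤ R → ∀ {x₀ : Ed d} {v : Ed d → ℝ},
      Measurable v → (∀ x, 0 ≤ v x) → Integrable (fun x => v x * (1 + ‖x - x₀‖) ^ (-(d : ℝ))) →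
      -(κ * (C * ∫ x in {x | R ≤ ‖x - x₀‖}, v x * (1 + ‖x - x₀‖) ^ (-(d : ℝ)))) ≤
        gagliardoE d s κ v (fun y => profile ε (d - 2 * s) R ‖y - x₀‖) := by
  obtain ⟨C, hC, hbound⟩ := exists_neg_le_gagliardoE_profile_norm hs0 hs1 hd
  refine ⟨C, hC, fun {κ ε R} hκ hε hR {x₀ v} hv hv0 hvi => ?_⟩
  have hmp := measurePreserving_add_right (volume : Measure (Ed d)) x₀
  have hemb := (MeasurableEquiv.addRight x₀).measurableEmbedding
  have htail := hmp.setIntegral_preimage_emb hemb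
    (fun x => v x * (1 + ‖x - x₀‖) ^ (-(d : ℝ))) {x | R ≤ ‖x - x₀‖}
  have hvi' := hvi.comp_add_right x₀
  have hset : (fun x => x + x₀) ⁻¹' {x | R ≤ ‖x - x₀‖} = {x | R ≤ ‖x‖} := by
    ext x
    simp
  simp only [hset, add_sub_cancel_right] at htail hvi'
  rw [gagliardoE_translate (w := fun y => profile ε (d - 2 * s) R ‖y‖), ← htail]
  exact hbound (v := fun x => v (x + x₀)) hκ hε hR (hv.comp (measurable_add_const x₀))
    (fun x => hv0 _) hvi'

end GagliardoForm

section TestFunctions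

open Metric

variable {d : ℕ} {ε R : ℝ}

lemma contDiff_profile_norm (hε : 0 < ε) (a R : ℝ) (x₀ : Ed d) :
    ContDiff ℝ (⊤ : ℕ∞) fun y : Ed d => profile ε a R ‖y - x₀‖ := by
  have hsq : ContDiff ℝ (⊤ : ℕ∞) fun y : Ed d => ‖y - x₀‖ ^ 2 :=
    (contDiff_id.sub contDiff_const).norm_sq ℝ
  unfold profile bubble cutoff
  refine ContDiff.mul ?_ ?_
  · exact (contDiff_const.add hsq).rpow_const_of_ne fun y => by positivity
  · refine Real.smoothTransition.contDiff.comp (contDiff_const.sub ?_)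
    simp only [div_pow]
    exact hsq.div_const _

lemma isTestFn_mul_profile (hε : 0 < ε) (hR : 0 < R) (a : ℝ) (x₀ : Ed d) {θ : ℝ → ℝ}
    (hθ : ContDiff ℝ (⊤ : ℕ∞) θ) (hθc : HasCompactSupport θ) (hθ0 : tsupport θ ⊆ Ioi 0) :
    IsTestFn d fun p => θ p.2 * profile ε a R ‖p.1 - x₀‖ := by
  refine ⟨(hθ.comp contDiff_snd).mul ((contDiff_profile_norm hε a R x₀).comp contDiff_fst),
    HasCompactSupport.intro ((isCompact_closedBall x₀ (2 * R)).prod hθc) fun p hp => ?_, ?_⟩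
  · rcases not_and_or.1 hp with hp | hp
    · rw [mem_closedBall, dist_eq_norm, not_le] at hp
      rw [profile_eq_zero hR hp.le, mul_zero]
    · rw [image_eq_zero_of_notMem_tsupport hp, zero_mul]
  · refine (closure_minimal (t := univ ×ˢ tsupport θ) (fun p hp => ?_)
      (isClosed_univ.prod (isClosed_tsupport θ))).trans (prod_mono_right hθ0)
    exact ⟨mem_univ _, subset_tsupport θ (left_ne_zero_of_mul hp)⟩

end TestFunctions

section DensityPairing

variable {d : ℕ} {s m κ : ℝ} {ρ : Ed d → ℝ} {u : Ed d → ℝ → ℝ}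

/-- The pairing `∫ f ρ u(·,t)` of the evolving density with a spatial observable `f`. -/
def pairing (ρ : Ed d → ℝ) (u : Ed d → ℝ → ℝ) (f : Ed d → ℝ) (t : ℝ) : ℝ :=
  ∫ x, f x * (u x t * ρ x)

lemma pairing_indicator_one {T : Set (Ed d)} (hT : MeasurableSet T) (t : ℝ) :
    pairing ρ u (T.indicator 1) t = ∫ x in T, u x t * ρ x := by
  rw [← integral_indicator hT]
  refine integral_congr_ae (Eventually.of_forall fun x => ?_)
  by_cases hx : x ∈ T <;> simp [hx]

lemma WeakSolCore.measurable_slice (hu : WeakSolCore d s m κ ρ u) (t : ℝ) :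
    Measurable fun x => u x t :=
  hu.measurable.comp (measurable_id.prodMk measurable_const)

lemma WeakSolCore.ae_mass_nonneg (hu : WeakSolCore d s m κ ρ u) (hρ0 : 0 ≤ᵐ[volume] ρ) (t : ℝ) :
    ∀ᵐ x, 0 ≤ u x t * ρ x := by
  filter_upwards [hρ0] with x hx using mul_nonneg (hu.nonneg x t) hx

lemma WeakSolCore.measurable_pairing (hu : WeakSolCore d s m κ ρ u) (hρ : Measurable ρ)
    {f : Ed d → ℝ} (hf : Measurable f) : Measurable (pairing ρ u f) := by
  have h : StronglyMeasurable (Function.uncurry fun (t : ℝ) (x : Ed d) =>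
      f x * (u x t * ρ x)) :=
    ((hf.comp measurable_snd).mul
      ((hu.measurable.comp measurable_swap).mul (hρ.comp measurable_snd))).stronglyMeasurable
  exact h.integral_prod_right.measurable

lemma WeakSolCore.exists_abs_pairing_le (hu : WeakSolCore d s m κ ρ u) (hρ0 : 0 ≤ᵐ[volume] ρ) :
    ∃ M : ℝ, ∀ᵐ t ∂volume.restrict (Ioi 0), ∀ {f : Ed d → ℝ} {b : ℝ}, (∀ x, |f x| ≤ b) →
      |pairing ρ u f t| ≤ b * M := by
  obtain ⟨M, hM⟩ := hu.massBound
  refine ⟨M, ?_⟩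
  filter_upwards [hM] with t ⟨hi, hiM⟩ f b hf
  have hb : 0 ≤ b := (abs_nonneg _).trans (hf 0)
  calc |pairing ρ u f t| ≤ ∫ x, b * (u x t * ρ x) := by
        rw [← Real.norm_eq_abs]
        refine norm_integral_le_of_norm_le (hi.const_mul b) ?_
        filter_upwards [hu.ae_mass_nonneg hρ0 t] with x hx
        rw [norm_mul, Real.norm_of_nonneg hx]
        exact mul_le_mul_of_nonneg_right (hf x) hx
    _ ≤ b * M := by rw [integral_const_mul]; gcongr

lemma WeakSolCore.integrableOn_mul_pairing (hu : WeakSolCore d s m κ ρ u) (hρ : Measurable ρ)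
    (hρ0 : 0 ≤ᵐ[volume] ρ) {f : Ed d → ℝ} {b : ℝ} (hf : Measurable f) (hfb : ∀ x, |f x| ≤ b)
    {η : ℝ → ℝ} (hη : Integrable η) :
    IntegrableOn (fun t => η t * pairing ρ u f t) (Ioi 0) := by
  obtain ⟨M, hM⟩ := hu.exists_abs_pairing_le hρ0
  refine hη.integrableOn.mul_bdd (c := b * M) (hu.measurable_pairing hρ hf).aestronglyMeasurable ?_
  filter_upwards [hM] with t ht using ht hfb

lemma abs_indicator_one_le {α : Type*} (T : Set α) (x : α) :
    |T.indicator (1 : α → ℝ) x| ≤ 1 := by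
  by_cases hx : x ∈ T <;> simp [hx]

lemma WeakSolCore.ae_tendsto_pairing (hu : WeakSolCore d s m κ ρ u) (hρ : Measurable ρ)
    (hρ0 : 0 ≤ᵐ[volume] ρ) {f : ℕ → Ed d → ℝ} {g : Ed d → ℝ} {b : ℝ} (hf : ∀ n, Measurable (f n))
    (hfb : ∀ n x, |f n x| ≤ b) (hfg : ∀ x, Tendsto (fun n => f n x) atTop (𝓝 (g x))) :
    ∀ᵐ t ∂volume.restrict (Ioi 0),
      Tendsto (fun n => pairing ρ u (f n) t) atTop (𝓝 (pairing ρ u g t)) := by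
  obtain ⟨M, hM⟩ := hu.massBound
  filter_upwards [hM] with t ht
  refine tendsto_integral_of_dominated_convergence (fun x => b * (u x t * ρ x)) (fun n => ?_)
    (ht.1.const_mul b) (fun n => ?_) (Eventually.of_forall fun x => (hfg x).mul_const _)
  · exact ((hf n).mul ((hu.measurable_slice t).mul hρ)).aestronglyMeasurable
  · filter_upwards [hu.ae_mass_nonneg hρ0 t] with x hx
    rw [norm_mul, Real.norm_of_nonneg hx]
    exact mul_le_mul_of_nonneg_right (hfb n x) hx

lemma WeakSolCore.tendsto_integral_mul_pairing (hu : WeakSolCore d s m κ ρ u) (hρ : Measurable ρ)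
    (hρ0 : 0 ≤ᵐ[volume] ρ) {f : ℕ → Ed d → ℝ} {g : Ed d → ℝ} {b : ℝ} (hf : ∀ n, Measurable (f n))
    (hfb : ∀ n x, |f n x| ≤ b) (hfg : ∀ x, Tendsto (fun n => f n x) atTop (𝓝 (g x)))
    {η : ℝ → ℝ} (hη : Integrable η) :
    Tendsto (fun n => ∫ t in Ioi 0, η t * pairing ρ u (f n) t) atTop
      (𝓝 (∫ t in Ioi 0, η t * pairing ρ u g t)) := by
  obtain ⟨M, hM⟩ := hu.exists_abs_pairing_le hρ0
  refine tendsto_integral_of_dominated_convergence (fun t => |η t| * (b * M)) (fun n => ?_)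
    (hη.abs.mul_const _).integrableOn (fun n => ?_) ?_
  · exact hη.aestronglyMeasurable.restrict.mul
      (hu.measurable_pairing hρ (hf n)).aestronglyMeasurable
  · filter_upwards [hM] with t ht
    rw [norm_mul]
    exact mul_le_mul_of_nonneg_left (ht (hfb n)) (abs_nonneg _)
  · filter_upwards [hu.ae_tendsto_pairing hρ hρ0 hf hfb hfg] with t ht using ht.const_mul _

lemma WeakSolCore.tendsto_integral_mul_pairing_profile (hu : WeakSolCore d s m κ ρ u)
    (hρ : Measurable ρ) (hρ0 : 0 ≤ᵐ[volume] ρ) {ε a : ℝ} (hε : 0 < ε) (ha : 0 ≤ a) (x₀ : Ed d)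
    {η : ℝ → ℝ} (hη : Integrable η) :
    Tendsto (fun n : ℕ => ∫ t in Ioi 0, η t *
        pairing ρ u (fun x => profile ε a (n + 1) ‖x - x₀‖) t) atTop
      (𝓝 (∫ t in Ioi 0, η t * pairing ρ u (fun x => bubble ε a ‖x - x₀‖) t)) := by
  refine hu.tendsto_integral_mul_pairing hρ hρ0 (b := ε ^ (-(a / 2)))
    (fun n => (measurable_profile ε _ _).comp (by fun_prop)) (fun n x => ?_) (fun x => ?_) hη
  · rw [Function.comp_apply, abs_of_nonneg (profile_nonneg hε)]
    exact (profile_le_bubble hε).trans (bubble_le hε ha)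
  · refine tendsto_const_nhds.congr' ?_
    filter_upwards [tendsto_natCast_atTop_atTop.eventually_ge_atTop ‖x - x₀‖] with n hn
    rw [Function.comp_apply, profile, cutoff_eq_one (norm_nonneg _) (by linarith), mul_one]

lemma WeakSolCore.tendsto_integral_mul_pairing_tail (hu : WeakSolCore d s m κ ρ u)
    (hρ : Measurable ρ) (hρ0 : 0 ≤ᵐ[volume] ρ) (x₀ : Ed d) {η : ℝ → ℝ} (hη : Integrable η) :
    Tendsto (fun n : ℕ => ∫ t in Ioi 0, η t *
        pairing ρ u ({x | (n : ℝ) + 1 ≤ ‖x - x₀‖}.indicator 1) t) atTop (𝓝 0) := by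
  have h := hu.tendsto_integral_mul_pairing hρ hρ0 (g := 0)
    (fun n : ℕ => measurable_one.indicator
      (measurableSet_le measurable_const (by fun_prop : Measurable fun x => ‖x - x₀‖)))
    (fun n x => abs_indicator_one_le {x | (n : ℝ) + 1 ≤ ‖x - x₀‖} x) (fun x => ?_) hη
  · simpa [pairing] using h
  · refine tendsto_const_nhds.congr' ?_
    filter_upwards [tendsto_natCast_atTop_atTop.eventually_ge_atTop ‖x - x₀‖] with n hn
    have : ¬(n : ℝ) + 1 ≤ ‖x - x₀‖ := by linarith
    simp [this]

end DensityPairing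

section TimeDerivative

variable {d : ℕ} {s m κ c τ ε R : ℝ} {ρ : Ed d → ℝ} {u : Ed d → ℝ → ℝ}

lemma ae_nonneg_of_ae_const_mul_rpow_le {q : ℝ} (hc : 0 < c)
    (hρc : ∀ᵐ x, c * (1 + ‖x‖) ^ q ≤ ρ x) : 0 ≤ᵐ[volume] ρ := by
  filter_upwards [hρc] with x hx using le_trans (by positivity) hx

lemma WeakSolCore.ae_ae_le (hu : WeakSolCore d s m κ ρ u) (hτ : 0 < τ) :
    ∃ B : ℝ, 0 ≤ B ∧ ∀ᵐ t : ℝ, τ < t → ∀ᵐ x : Ed d, u x t ≤ B := by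
  obtain ⟨B, hB⟩ := hu.essBdd τ hτ
  refine ⟨max B 0, le_max_right _ _, ?_⟩
  have hswap : ∀ᵐ q : ℝ × Ed d, τ < q.swap.2 → u q.swap.1 q.swap.2 ≤ B :=
    (Measure.measurePreserving_swap (μ := (volume : Measure ℝ))
      (ν := (volume : Measure (Ed d)))).quasiMeasurePreserving.ae hB
  filter_upwards [Measure.ae_ae_of_ae_prod hswap] with t ht hτt
  filter_upwards [ht] with x hx using (hx hτt).trans (le_max_left _ _)

lemma one_add_norm_sub_rpow_neg_le {E : Type*} [NormedAddCommGroup E] {q : ℝ} (hq : 0 ≤ q)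
    (x x₀ : E) : (1 + ‖x - x₀‖) ^ (-q) ≤ (1 + ‖x₀‖) ^ q * (1 + ‖x‖) ^ (-q) := by
  have hx : 1 + ‖x‖ ≤ (1 + ‖x₀‖) * (1 + ‖x - x₀‖) := by
    nlinarith [norm_le_norm_add_norm_sub' x x₀, mul_nonneg (norm_nonneg x₀) (norm_nonneg (x - x₀))]
  rw [Real.rpow_neg (by positivity), Real.rpow_neg (by positivity), ← div_eq_mul_inv,
    ← Real.div_rpow (by positivity) (by positivity), ← Real.inv_rpow (by positivity)]
  gcongr
  rw [inv_le_comm₀ (by positivity) (by positivity), inv_div, div_le_iff₀' (by positivity)]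
  exact hx

lemma rpow_le_rpow_sub_one_mul {B r : ℝ} (hm : 1 ≤ m) (hr : 0 ≤ r) (hrB : r ≤ B) :
    r ^ m ≤ B ^ (m - 1) * r := by
  calc r ^ m = r ^ (m - 1 + 1) := by rw [sub_add_cancel]
    _ = r ^ (m - 1) * r := Real.rpow_add_one' hr (by linarith)
    _ ≤ B ^ (m - 1) * r := by gcongr

lemma WeakSolCore.exists_rpow_mul_le (hu : WeakSolCore d s m κ ρ u) (hm : 1 ≤ m) (hc : 0 < c)
    (hρc : ∀ᵐ x, c * (1 + ‖x‖) ^ (-(d : ℝ)) ≤ ρ x) (hτ : 0 < τ) (x₀ : Ed d) :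
    ∃ K, 0 ≤ K ∧ ∀ᵐ t, τ < t → ∀ᵐ x,
      u x t ^ m * (1 + ‖x - x₀‖) ^ (-(d : ℝ)) ≤ K * (u x t * ρ x) := by
  obtain ⟨B, hB0, hB⟩ := hu.ae_ae_le hτ
  refine ⟨B ^ (m - 1) * ((1 + ‖x₀‖) ^ (d : ℝ) * c⁻¹), by positivity, ?_⟩
  filter_upwards [hB] with t ht hτt
  filter_upwards [ht hτt, hρc] with x hx hρx
  have hweight : (1 + ‖x - x₀‖) ^ (-(d : ℝ)) ≤ (1 + ‖x₀‖) ^ (d : ℝ) * (c⁻¹ * ρ x) := by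
    refine (one_add_norm_sub_rpow_neg_le d.cast_nonneg x x₀).trans ?_
    gcongr
    rwa [inv_mul_eq_div, le_div_iff₀' hc]
  have hux := hu.nonneg x t
  calc u x t ^ m * (1 + ‖x - x₀‖) ^ (-(d : ℝ))
      ≤ (B ^ (m - 1) * u x t) * ((1 + ‖x₀‖) ^ (d : ℝ) * (c⁻¹ * ρ x)) := by
        gcongr
        exact rpow_le_rpow_sub_one_mul hm hux hx
    _ = _ := by ring

lemma WeakSolCore.exists_neg_pairing_le_gagliardoE (hu : WeakSolCore d s m κ ρ u) (hs0 : 0 < s)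
    (hs1 : s < 1) (hd : 2 * s ≤ d) (hm : 1 ≤ m) (hκ : 0 ≤ κ) (hc : 0 < c)
    (hρc : ∀ᵐ x, c * (1 + ‖x‖) ^ (-(d : ℝ)) ≤ ρ x) (hτ : 0 < τ) (x₀ : Ed d) :
    ∃ K, 0 ≤ K ∧ ∀ᵐ t, τ < t → ∀ {ε R : ℝ}, 0 < ε → 1 ≤ R →
      -(K * pairing ρ u ({x | R ≤ ‖x - x₀‖}.indicator 1) t) ≤
        gagliardoE d s κ (fun x => u x t ^ m) (fun x => profile ε (d - 2 * s) R ‖x - x₀‖) := by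
  obtain ⟨C, hC, hbound⟩ := exists_neg_le_gagliardoE_profile (d := d) hs0 hs1 hd
  obtain ⟨K, hK, hle⟩ := hu.exists_rpow_mul_le hm hc hρc hτ x₀
  obtain ⟨M, hM⟩ := hu.massBound
  rw [ae_restrict_iff' measurableSet_Ioi] at hM
  refine ⟨κ * C * K, by positivity, ?_⟩
  filter_upwards [hle, hM] with t ht hMt hτt ε R hε hR
  have hum : Measurable fun x => u x t ^ m := (hu.measurable_slice t).pow_const m
  have hu0 (x : Ed d) : 0 ≤ u x t ^ m := Real.rpow_nonneg (hu.nonneg x t) m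
  have hi : Integrable fun x => K * (u x t * ρ x) := (hMt (hτ.trans hτt)).1.const_mul K
  have hint : Integrable fun x => u x t ^ m * (1 + ‖x - x₀‖) ^ (-(d : ℝ)) := by
    refine hi.mono' (Measurable.aestronglyMeasurable (by fun_prop)) ?_
    filter_upwards [ht hτt] with x hx
    rwa [Real.norm_of_nonneg (mul_nonneg (hu0 x) (by positivity))]
  refine le_trans ?_ (hbound hκ hε hR hum hu0 hint)
  rw [pairing_indicator_one (measurableSet_le measurable_const (by fun_prop)), mul_assoc,
    mul_assoc, ← integral_const_mul, neg_le_neg_iff]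
  refine mul_le_mul_of_nonneg_left (mul_le_mul_of_nonneg_left ?_ hC) hκ
  exact setIntegral_mono_ae hint.integrableOn hi.integrableOn (ht hτt)

lemma WeakSolCore.integral_deriv_mul_pairing_profile (hu : WeakSolCore d s m κ ρ u) (hε : 0 < ε)
    (hR : 0 < R) (a : ℝ) (x₀ : Ed d) {θ : ℝ → ℝ} (hθ : ContDiff ℝ (⊤ : ℕ∞) θ)
    (hθc : HasCompactSupport θ) (hθ0 : tsupport θ ⊆ Ioi 0) :
    ∫ t in Ioi 0, deriv θ t * pairing ρ u (fun x => profile ε a R ‖x - x₀‖) t =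
      ∫ t in Ioi 0, θ t * gagliardoE d s κ (fun x => u x t ^ m)
        (fun x => profile ε a R ‖x - x₀‖) := by
  have hweak := hu.weakForm _ (isTestFn_mul_profile hε hR a x₀ hθ hθc hθ0)
  have hθd : Differentiable ℝ θ := hθ.differentiable (by simp)
  have hderiv (t : ℝ) : ∫ x, u x t * deriv (fun τ => θ τ * profile ε a R ‖x - x₀‖) t * ρ x =
      deriv θ t * pairing ρ u (fun x => profile ε a R ‖x - x₀‖) t := by
    rw [pairing, ← integral_const_mul]
    congr! 2
    rw [deriv_mul_const hθd.differentiableAt]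
    ring
  simp only [hderiv, gagliardoE_const_mul] at hweak
  linarith

lemma exists_forall_le_eq_zero_of_tsupport_subset_Ioi {a : ℝ} {θ : ℝ → ℝ}
    (hθ : tsupport θ ⊆ Ioi a) : ∃ τ, a < τ ∧ ∀ t ≤ τ, θ t = 0 := by
  have ha : a ∉ tsupport θ := fun h => lt_irrefl a (hθ h)
  obtain ⟨δ, hδ, hball⟩ := Metric.isOpen_iff.1 (isClosed_tsupport θ).isOpen_compl a ha
  refine ⟨a + δ / 2, by linarith, fun t ht => image_eq_zero_of_notMem_tsupport fun hmem => ?_⟩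
  refine hball ?_ hmem
  have : a < t := hθ hmem
  rw [Metric.mem_ball, Real.dist_eq, abs_lt]
  constructor <;> linarith

lemma WeakSolCore.exists_neg_le_integral_deriv_mul_pairing_profile (hu : WeakSolCore d s m κ ρ u)
    (hs0 : 0 < s) (hs1 : s < 1) (hd : 2 * s ≤ d) (hm : 1 ≤ m) (hκ : 0 ≤ κ) (hρ : Measurable ρ)
    (hc : 0 < c) (hρc : ∀ᵐ x, c * (1 + ‖x‖) ^ (-(d : ℝ)) ≤ ρ x) (x₀ : Ed d) {θ : ℝ → ℝ}
    (hθ : ContDiff ℝ (⊤ : ℕ∞) θ) (hθc : HasCompactSupport θ) (hθ0 : tsupport θ ⊆ Ioi 0)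
    (hθn : ∀ t, 0 ≤ θ t) :
    ∃ K, ∀ {ε R : ℝ}, 0 < ε → 1 ≤ R →
      -(K * ∫ t in Ioi 0, θ t * pairing ρ u ({x | R ≤ ‖x - x₀‖}.indicator 1) t) ≤
        ∫ t in Ioi 0, deriv θ t *
          pairing ρ u (fun x => profile ε (d - 2 * s) R ‖x - x₀‖) t := by
  obtain ⟨τ, hτ, hθτ⟩ := exists_forall_le_eq_zero_of_tsupport_subset_Ioi hθ0
  obtain ⟨K, hK, hbound⟩ := hu.exists_neg_pairing_le_gagliardoE hs0 hs1 hd hm hκ hc hρc hτ x₀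
  refine ⟨K, fun {ε R} hε hR => ?_⟩
  have hρ0 := ae_nonneg_of_ae_const_mul_rpow_le hc hρc
  set tail := pairing ρ u ({x | R ≤ ‖x - x₀‖}.indicator 1)
  have htail0 (t : ℝ) : 0 ≤ tail t := integral_nonneg_of_ae <| by
    filter_upwards [hu.ae_mass_nonneg hρ0 t] with x hx
    exact mul_nonneg (indicator_nonneg (fun _ _ => zero_le_one) x) hx
  have htaili : IntegrableOn (fun t => θ t * tail t) (Ioi 0) :=
    hu.integrableOn_mul_pairing hρ hρ0
      (measurable_one.indicator (measurableSet_le measurable_const (by fun_prop)))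
      (fun x => (abs_indicator_one_le _ x)) (hθ.continuous.integrable_of_hasCompactSupport hθc)
  rw [hu.integral_deriv_mul_pairing_profile hε (by linarith) _ x₀ hθ hθc hθ0,
    ← integral_const_mul, ← integral_neg]
  by_cases hint : IntegrableOn (fun t => θ t * gagliardoE d s κ (fun x => u x t ^ m)
      (fun x => profile ε (d - 2 * s) R ‖x - x₀‖)) (Ioi 0)
  · refine integral_mono_ae (htaili.const_mul K).neg hint (ae_restrict_of_ae ?_)
    filter_upwards [hbound] with t ht
    rcases le_or_gt t τ with htτ | htτ
    · simp [hθτ t htτ]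
    · have := mul_le_mul_of_nonneg_left (ht htτ hε hR) (hθn t)
      linarith
  · rw [integral_undef hint]
    exact integral_nonpos fun t => neg_nonpos.2 (mul_nonneg hK (mul_nonneg (hθn t) (htail0 t)))

lemma WeakSolCore.integral_deriv_mul_pairing_bubble_nonneg (hu : WeakSolCore d s m κ ρ u)
    (hs0 : 0 < s) (hs1 : s < 1) (hd : 2 * s ≤ d) (hm : 1 ≤ m) (hκ : 0 ≤ κ) (hρ : Measurable ρ)
    (hc : 0 < c) (hρc : ∀ᵐ x, c * (1 + ‖x‖) ^ (-(d : ℝ)) ≤ ρ x) (hε : 0 < ε) (x₀ : Ed d)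
    {θ : ℝ → ℝ} (hθ : ContDiff ℝ (⊤ : ℕ∞) θ) (hθc : HasCompactSupport θ)
    (hθ0 : tsupport θ ⊆ Ioi 0) (hθn : ∀ t, 0 ≤ θ t) :
    0 ≤ ∫ t in Ioi 0, deriv θ t * pairing ρ u (fun x => bubble ε (d - 2 * s) ‖x - x₀‖) t := by
  obtain ⟨K, hK⟩ := hu.exists_neg_le_integral_deriv_mul_pairing_profile hs0 hs1 hd hm hκ hρ hc hρc
    x₀ hθ hθc hθ0 hθn
  have hρ0 := ae_nonneg_of_ae_const_mul_rpow_le hc hρc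
  have hbubble := hu.tendsto_integral_mul_pairing_profile hρ hρ0 hε
    (a := d - 2 * s) (by linarith) x₀
    ((hθ.continuous_deriv (by simp)).integrable_of_hasCompactSupport hθc.deriv)
  have htail := hu.tendsto_integral_mul_pairing_tail hρ hρ0 x₀
    (hθ.continuous.integrable_of_hasCompactSupport hθc)
  have hlower := (htail.const_mul K).neg
  rw [mul_zero, neg_zero] at hlower
  exact le_of_tendsto_of_tendsto' hlower hbubble fun n => hK hε (by simp)

end TimeDerivative

section OneDimensional

open scoped Convolution

open ContinuousLinearMap (lsmul)

variable {F : ℝ → ℝ} {a : ℝ}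

/-- The distributional inequality `F' ≤ 0` on `(a, ∞)`, tested against nonnegative functions. -/
def DistribDerivNonpos (F : ℝ → ℝ) (a : ℝ) : Prop :=
  ∀ θ : ℝ → ℝ, ContDiff ℝ (⊤ : ℕ∞) θ → HasCompactSupport θ → tsupport θ ⊆ Ioi a →
    (∀ t, 0 ≤ θ t) → 0 ≤ ∫ t, deriv θ t * F t

lemma DistribDerivNonpos.integral_deriv_bump_mul_nonpos (hF : DistribDerivNonpos F a)
    (φ : ContDiffBump (0 : ℝ)) {t : ℝ} (ht : a + φ.rOut < t) :
    ∫ r, deriv (φ.normed volume) (t - r) * F r ≤ 0 := by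
  have hsupp : Function.support (fun r => φ.normed volume (t - r)) ⊆
      Metric.closedBall t φ.rOut := fun r hr => by
    have : t - r ∈ Metric.ball 0 φ.rOut := φ.support_normed_eq (μ := volume) ▸ hr
    rw [mem_ball_zero_iff, ← dist_eq_norm, dist_comm] at this
    exact this.le
  have htest := hF (fun r => φ.normed volume (t - r))
    (φ.contDiff_normed.comp (contDiff_const.sub contDiff_id))
    (HasCompactSupport.of_support_subset_isCompact (isCompact_closedBall t φ.rOut) hsupp)
    ((closure_minimal hsupp Metric.isClosed_closedBall).trans fun r hr => ?_)
    fun r => φ.nonneg_normed _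
  · simpa only [deriv_comp_const_sub, neg_mul, integral_neg, neg_nonneg] using htest
  · rw [Metric.mem_closedBall, Real.dist_eq, abs_le] at hr
    rw [mem_Ioi]
    linarith

lemma DistribDerivNonpos.antitoneOn_convolution (hF : DistribDerivNonpos F a)
    (hFi : LocallyIntegrable F) (φ : ContDiffBump (0 : ℝ)) :
    AntitoneOn (φ.normed volume ⋆[lsmul ℝ ℝ, volume] F) (Ioi (a + φ.rOut)) := by
  have hderiv (t : ℝ) := φ.hasCompactSupport_normed.hasDerivAt_convolution_left (lsmul ℝ ℝ)
    (φ.contDiff_normed (μ := volume) (n := 1)) hFi t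
  refine antitoneOn_of_deriv_nonpos (convex_Ioi _)
    (fun t _ => (hderiv t).continuousAt.continuousWithinAt)
    (fun t _ => (hderiv t).differentiableAt.differentiableWithinAt) fun t ht => ?_
  rw [interior_Ioi] at ht
  rw [(hderiv t).deriv, convolution_lsmul_swap]
  exact hF.integral_deriv_bump_mul_nonpos φ ht

lemma DistribDerivNonpos.exists_antitoneOn (hF : DistribDerivNonpos F a)
    (hFi : LocallyIntegrable F) : ∃ Z : Set ℝ, volume Z = 0 ∧ AntitoneOn F (Ioi a \ Z) := by
  let φ (n : ℕ) : ContDiffBump (0 : ℝ) :=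
    ⟨1 / ((n : ℝ) + 1) / 2, 1 / ((n : ℝ) + 1), by positivity, half_lt_self (by positivity)⟩
  have hφ : Tendsto (fun n => (φ n).rOut) atTop (𝓝 0) := tendsto_one_div_add_atTop_nhds_zero_nat
  have hconv := ContDiffBump.ae_convolution_tendsto_right_of_locallyIntegrable (K := 2) hφ
    (Eventually.of_forall fun n => (mul_div_cancel₀ _ two_ne_zero).ge) hFi
  refine ⟨_, ae_iff.1 hconv, fun t₁ ht₁ t₂ ht₂ ht => ?_⟩
  have hlim₁ := not_not.1 ht₁.2
  have hlim₂ := not_not.1 ht₂.2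
  refine le_of_tendsto_of_tendsto hlim₂ hlim₁ ?_
  filter_upwards [hφ.eventually_lt_const (sub_pos.2 ht₁.1)] with n hn
  have hn₁ : a + (φ n).rOut < t₁ := by linarith
  exact hF.antitoneOn_convolution hFi (φ n) hn₁ (hn₁.trans_le ht) ht

lemma DistribDerivNonpos.ae_le_of_tendsto (hF : DistribDerivNonpos F a) (hFi : LocallyIntegrable F)
    {N : Set ℝ} (hN : volume N = 0) {L : ℝ} (hL : Tendsto F (𝓝[Ioi a \ N] a) (𝓝 L)) :
    ∀ᵐ t, a < t → F t ≤ L := by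
  obtain ⟨Z, hZ, hanti⟩ := hF.exists_antitoneOn hFi
  have hZae : ∀ᵐ t : ℝ, t ∉ Z := measure_eq_zero_iff_ae_notMem.1 hZ
  filter_upwards [hZae] with t htZ hat
  have hdense : Dense (N ∪ Z)ᶜ := Measure.dense_of_ae <|
    measure_eq_zero_iff_ae_notMem.1 (measure_union_null hN hZ)
  have : (𝓝[Ioi a \ (N ∪ Z)] a).NeBot := by
    rw [← mem_closure_iff_nhdsWithin_neBot]
    refine closure_minimal (hdense.open_subset_closure_inter isOpen_Ioi) isClosed_closure ?_
    rw [closure_Ioi, mem_Ici]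
  refine ge_of_tendsto (hL.mono_left (nhdsWithin_mono a
    (sdiff_subset_sdiff_right (subset_union_left (t := Z))))) ?_
  filter_upwards [self_mem_nhdsWithin, mem_nhdsWithin_of_mem_nhds (Iio_mem_nhds hat)] with r hr hrt
  exact hanti ⟨hr.1, fun h => hr.2 (Or.inr h)⟩ ⟨hat, htZ⟩ hrt.le

end OneDimensional

section BubblePotential

variable {d : ℕ} {s m κ ε a : ℝ} {ρ : Ed d → ℝ} {u : Ed d → ℝ → ℝ}

/-- The potential of `ν` with respect to the regularized Riesz kernel `bubble ε a`. -/
def bubblePotential (ε a : ℝ) (ν : Measure (Ed d)) (x : Ed d) : ℝ≥0∞ :=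
  ∫⁻ y, ENNReal.ofReal (bubble ε a ‖y - x‖) ∂ν

/-- The measure `ρ u(·,t) dx`. -/
def massMeasure (ρ : Ed d → ℝ) (u : Ed d → ℝ → ℝ) (t : ℝ) : Measure (Ed d) :=
  volume.withDensity fun y => ENNReal.ofReal (u y t * ρ y)

lemma bubble_anti_left (ha : 0 ≤ a) (r : ℝ) : AntitoneOn (fun ε => bubble ε a r) (Ioi 0) :=
  fun ε (hε : 0 < ε) δ _ h =>
    Real.rpow_le_rpow_of_nonpos (by positivity) (by linarith) (by linarith)

lemma monotone_bubble_one_div (ha : 0 ≤ a) (r : ℝ) :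
    Monotone fun n : ℕ => bubble (1 / ((n : ℝ) + 1)) a r := fun _ _ h =>
  bubble_anti_left ha r (Nat.one_div_pos_of_nat (α := ℝ)) (Nat.one_div_pos_of_nat (α := ℝ))
    (Nat.one_div_le_one_div h)

lemma continuous_bubble (hε : 0 < ε) (a : ℝ) : Continuous (bubble ε a) :=
  (continuous_const.add (continuous_pow 2)).rpow_const fun r =>
    Or.inl (by positivity : ε + r ^ 2 ≠ 0)

lemma continuous_bubble_norm_sub (hε : 0 < ε) (a : ℝ) (x : Ed d) :
    Continuous fun y => bubble ε a ‖y - x‖ :=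
  (continuous_bubble hε a).comp (continuous_id.sub continuous_const).norm

lemma abs_bubble_le (hε : 0 < ε) (ha : 0 ≤ a) (r : ℝ) : |bubble ε a r| ≤ ε ^ (-(a / 2)) := by
  rw [abs_of_pos (bubble_pos hε)]
  exact bubble_le hε ha

lemma iSup_ofReal_bubble (ha : 0 ≤ a) {r : ℝ} (hr : 0 ≤ r) :
    ⨆ n : ℕ, ENNReal.ofReal (bubble (1 / ((n : ℝ) + 1)) a r) = ENNReal.ofReal r ^ (-a) := by
  refine tendsto_nhds_unique (tendsto_atTop_iSup fun n k hnk =>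
    ENNReal.ofReal_le_ofReal (monotone_bubble_one_div ha r hnk)) ?_
  have hbase : Tendsto (fun n : ℕ => 1 / ((n : ℝ) + 1) + r ^ 2) atTop (𝓝 (r ^ 2)) := by
    simpa using tendsto_one_div_add_atTop_nhds_zero_nat.add_const (r ^ 2)
  have hpow : ENNReal.ofReal (r ^ 2) ^ (-(a / 2)) = ENNReal.ofReal r ^ (-a) := by
    rw [ENNReal.ofReal_pow hr, ← ENNReal.rpow_natCast, ← ENNReal.rpow_mul]
    congr 1
    push_cast
    ring
  rw [← hpow]
  refine (((ENNReal.continuous_rpow_const (y := -(a / 2))).tendsto _).comp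
    (ENNReal.tendsto_ofReal hbase)).congr fun n => ?_
  exact ENNReal.ofReal_rpow_of_pos (by positivity)

lemma rieszPotMeas_eq_iSup (hd : 2 * s ≤ d) (k : ℝ) (ν : Measure (Ed d)) (x : Ed d) :
    rieszPotMeas d s k ν x = ⨆ n : ℕ, ENNReal.ofReal k *
      bubblePotential (1 / ((n : ℝ) + 1)) (d - 2 * s) ν x := by
  have ha : 0 ≤ (d : ℝ) - 2 * s := by linarith
  simp only [rieszPotMeas, bubblePotential]
  rw [← ENNReal.mul_iSup, ← lintegral_iSup]
  · congr! 3 with y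
    rw [iSup_ofReal_bubble ha (norm_nonneg _), norm_sub_rev, neg_sub]
  · exact fun n => (continuous_bubble_norm_sub (by positivity) _ x).measurable.ennreal_ofReal
  · exact fun n k hnk y => ENNReal.ofReal_le_ofReal (monotone_bubble_one_div ha _ hnk)

lemma WeakSolCore.rieszPotU_eq_rieszPotMeas (hu : WeakSolCore d s m κ ρ u) (hρ : Measurable ρ)
    (k : ℝ) (x : Ed d) (t : ℝ) :
    rieszPotU d s k ρ u x t = rieszPotMeas d s k (massMeasure ρ u t) x := by
  rw [rieszPotU, rieszPotMeas, massMeasure, lintegral_withDensity_eq_lintegral_mul]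
  · simp only [Pi.mul_apply, mul_comm]
  · exact ((hu.measurable_slice t).mul hρ).ennreal_ofReal
  · fun_prop

lemma integrable_bubble (hε : 0 < ε) (ha : 0 ≤ a) (ν : Measure (Ed d)) [IsFiniteMeasure ν]
    (x : Ed d) : Integrable (fun y => bubble ε a ‖y - x‖) ν :=
  Integrable.of_bound (continuous_bubble_norm_sub hε a x).aestronglyMeasurable _
    (Eventually.of_forall fun _ => abs_bubble_le hε ha _)

lemma bubblePotential_eq_ofReal_integral (hε : 0 < ε) (ha : 0 ≤ a) (ν : Measure (Ed d))
    [IsFiniteMeasure ν] (x : Ed d) :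
    bubblePotential ε a ν x = ENNReal.ofReal (∫ y, bubble ε a ‖y - x‖ ∂ν) :=
  (ofReal_integral_eq_lintegral_ofReal (integrable_bubble hε ha ν x)
    (Eventually.of_forall fun _ => (bubble_pos hε).le)).symm

lemma continuous_bubblePotential (hε : 0 < ε) (ha : 0 ≤ a) (ν : Measure (Ed d))
    [IsFiniteMeasure ν] : Continuous (bubblePotential ε a ν) := by
  rw [funext (bubblePotential_eq_ofReal_integral hε ha ν)]
  refine ENNReal.continuous_ofReal.comp (continuous_of_dominated
    (bound := fun _ => ε ^ (-(a / 2)))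
    (fun x => (continuous_bubble_norm_sub hε a x).aestronglyMeasurable)
    (fun x => Eventually.of_forall fun y => abs_bubble_le hε ha _) (integrable_const _)
    (Eventually.of_forall fun y => ?_))
  exact (continuous_bubble hε a).comp (continuous_const.sub continuous_id).norm

lemma isFiniteMeasure_massMeasure {t : ℝ} (hi : Integrable fun x => u x t * ρ x) :
    IsFiniteMeasure (massMeasure ρ u t) :=
  isFiniteMeasure_withDensity_ofReal hi.2

lemma WeakSolCore.bubblePotential_massMeasure (hu : WeakSolCore d s m κ ρ u) (hρ : Measurable ρ)
    (hρ0 : 0 ≤ᵐ[volume] ρ) (hε : 0 < ε) (ha : 0 ≤ a) {t : ℝ}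
    (hi : Integrable fun x => u x t * ρ x) (x : Ed d) :
    bubblePotential ε a (massMeasure ρ u t) x =
      ENNReal.ofReal (pairing ρ u (fun y => bubble ε a ‖y - x‖) t) := by
  have := isFiniteMeasure_massMeasure hi
  have hmeas : Measurable fun y => ENNReal.ofReal (u y t * ρ y) :=
    ((hu.measurable_slice t).mul hρ).ennreal_ofReal
  rw [bubblePotential_eq_ofReal_integral hε ha, massMeasure,
    integral_withDensity_eq_integral_toReal_smul₀ hmeas.aemeasurable
      (Eventually.of_forall fun _ => ENNReal.ofReal_lt_top), pairing]
  congr 1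
  refine integral_congr_ae ?_
  filter_upwards [hu.ae_mass_nonneg hρ0 t] with y hy
  rw [ENNReal.toReal_ofReal hy, smul_eq_mul, mul_comm]

end BubblePotential

section Comparison

variable {d : ℕ} {s m κ c ε : ℝ} {ρ : Ed d → ℝ} {u : Ed d → ℝ → ℝ}

lemma WeakSolCore.locallyIntegrable_indicator_pairing (hu : WeakSolCore d s m κ ρ u)
    (hρ : Measurable ρ) (hρ0 : 0 ≤ᵐ[volume] ρ) {f : Ed d → ℝ} {b : ℝ} (hf : Measurable f)
    (hfb : ∀ x, |f x| ≤ b) : LocallyIntegrable ((Ioi 0).indicator (pairing ρ u f)) := by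
  obtain ⟨M, hM⟩ := hu.exists_abs_pairing_le hρ0
  rw [ae_restrict_iff' measurableSet_Ioi] at hM
  have hb : 0 ≤ b := (abs_nonneg _).trans (hfb 0)
  refine (memLp_top_of_bound
    ((hu.measurable_pairing hρ hf).indicator measurableSet_Ioi).aestronglyMeasurable
    (b * |M|) ?_).locallyIntegrable le_top
  filter_upwards [hM] with t ht
  by_cases ht0 : t ∈ Ioi 0
  · rw [indicator_of_mem ht0]
    exact (ht ht0 hfb).trans (mul_le_mul_of_nonneg_left (le_abs_self M) hb)
  · rw [indicator_of_notMem ht0, norm_zero]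
    positivity

lemma WeakSolCore.distribDerivNonpos_pairing_bubble (hu : WeakSolCore d s m κ ρ u)
    (hs0 : 0 < s) (hs1 : s < 1) (hd : 2 * s ≤ d) (hm : 1 ≤ m) (hκ : 0 ≤ κ) (hρ : Measurable ρ)
    (hc : 0 < c) (hρc : ∀ᵐ x, c * (1 + ‖x‖) ^ (-(d : ℝ)) ≤ ρ x) (hε : 0 < ε) (x₀ : Ed d) :
    DistribDerivNonpos
      ((Ioi 0).indicator (pairing ρ u fun x => bubble ε (d - 2 * s) ‖x - x₀‖)) 0 := by
  intro θ hθ hθc hθ0 hθn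
  simp only [← indicator_mul_right]
  rw [integral_indicator measurableSet_Ioi]
  exact hu.integral_deriv_mul_pairing_bubble_nonneg hs0 hs1 hd hm hκ hρ hc hρc hε x₀ hθ hθc hθ0 hθn

lemma IsWeakSolution.ae_pairing_bubble_le {μ : Measure (Ed d)} (hu : IsWeakSolution d s m κ ρ μ u)
    (hs0 : 0 < s) (hs1 : s < 1) (hd : 2 * s ≤ d) (hm : 1 ≤ m) (hκ : 0 ≤ κ) (hρ : Measurable ρ)
    (hc : 0 < c) (hρc : ∀ᵐ x, c * (1 + ‖x‖) ^ (-(d : ℝ)) ≤ ρ x) (hε : 0 < ε) (x₀ : Ed d) :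
    ∀ᵐ t : ℝ, 0 < t → pairing ρ u (fun x => bubble ε (d - 2 * s) ‖x - x₀‖) t ≤
      ∫ x, bubble ε (d - 2 * s) ‖x - x₀‖ ∂μ := by
  obtain ⟨hcore, N, hN, htrace⟩ := hu
  have hcont := continuous_bubble_norm_sub hε (d - 2 * s) x₀
  have hbound (x : Ed d) := abs_bubble_le hε (by linarith : 0 ≤ (d : ℝ) - 2 * s) ‖x - x₀‖
  have hlim := htrace _ hcont ⟨_, hbound⟩
  have hle := (hcore.distribDerivNonpos_pairing_bubble hs0 hs1 hd hm hκ hρ hc hρc hε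
    x₀).ae_le_of_tendsto (hcore.locallyIntegrable_indicator_pairing hρ
      (ae_nonneg_of_ae_const_mul_rpow_le hc hρc) hcont.measurable hbound) hN
      (hlim.congr' ?_)
  · filter_upwards [hle] with t ht ht0
    simpa only [indicator_of_mem (mem_Ioi.2 ht0)] using ht ht0
  · filter_upwards [self_mem_nhdsWithin] with t ht
    rw [indicator_of_mem ht.1, pairing]

lemma IsWeakSolution.ae_bubblePotential_le {μ : Measure (Ed d)} [IsFiniteMeasure μ]
    (hu : IsWeakSolution d s m κ ρ μ u) (hs0 : 0 < s) (hs1 : s < 1) (hd : 2 * s ≤ d) (hm : 1 ≤ m)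
    (hκ : 0 ≤ κ) (hρ : Measurable ρ) (hc : 0 < c)
    (hρc : ∀ᵐ x, c * (1 + ‖x‖) ^ (-(d : ℝ)) ≤ ρ x) (hε : 0 < ε) :
    ∀ᵐ t : ℝ, 0 < t → ∀ x, bubblePotential ε (d - 2 * s) (massMeasure ρ u t) x ≤
      bubblePotential ε (d - 2 * s) μ x := by
  have ha : 0 ≤ (d : ℝ) - 2 * s := by linarith
  have hdense := ae_all_iff.2 fun j => hu.ae_pairing_bubble_le hs0 hs1 hd hm hκ hρ hc hρc hε
    (TopologicalSpace.denseSeq (Ed d) j)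
  obtain ⟨M, hM⟩ := hu.1.massBound
  rw [ae_restrict_iff' measurableSet_Ioi] at hM
  filter_upwards [hdense, hM] with t ht hMt ht0
  have hi := (hMt ht0).1
  have := isFiniteMeasure_massMeasure hi
  refine fun x => (TopologicalSpace.denseRange_denseSeq (Ed d)).induction_on x
    (isClosed_le (continuous_bubblePotential hε ha _) (continuous_bubblePotential hε ha μ))
    fun j => ?_
  rw [hu.1.bubblePotential_massMeasure hρ (ae_nonneg_of_ae_const_mul_rpow_le hc hρc) hε ha hi,
    bubblePotential_eq_ofReal_integral hε ha]
  exact ENNReal.ofReal_le_ofReal (ht j ht0)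

end Comparison

section Convergence

variable {d : ℕ} {s m κ : ℝ} {ρ : Ed d → ℝ} {u : Ed d → ℝ → ℝ} {μ : Measure (Ed d)}

lemma tendsto_iSup_of_eventually_le {α β ι : Type*} [CompleteLinearOrder β] [TopologicalSpace β]
    [OrderTopology β] {l : Filter α} {f : ι → α → β} {g : ι → β}
    (hfg : ∀ n, Tendsto (f n) l (𝓝 (g n))) (hle : ∀ᶠ t in l, ∀ n, f n t ≤ g n) :
    Tendsto (fun t => ⨆ n, f n t) l (𝓝 (⨆ n, g n)) := by
  refine tendsto_order.2 ⟨fun b hb => ?_, fun b hb => ?_⟩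
  · obtain ⟨n, hn⟩ := lt_iSup_iff.1 hb
    filter_upwards [(hfg n).eventually_const_lt hn] with t ht using ht.trans_le (le_iSup (f · t) n)
  · filter_upwards [hle] with t ht using (iSup_mono ht).trans_lt hb

lemma IsWeakSolution.exists_tendsto_bubblePotential [IsFiniteMeasure μ]
    (hu : IsWeakSolution d s m κ ρ μ u) (hρ : Measurable ρ) (hρ0 : 0 ≤ᵐ[volume] ρ) {a : ℝ}
    (ha : 0 ≤ a) :
    ∃ N : Set ℝ, volume N = 0 ∧ ∀ {ε : ℝ}, 0 < ε → ∀ x,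
      Tendsto (fun t => bubblePotential ε a (massMeasure ρ u t) x) (𝓝[Ioi 0 \ N] 0)
        (𝓝 (bubblePotential ε a μ x)) := by
  obtain ⟨hcore, N, hN, htrace⟩ := hu
  obtain ⟨M, hM⟩ := hcore.massBound
  rw [ae_restrict_iff' measurableSet_Ioi] at hM
  obtain ⟨Z, hZM, -, hZ⟩ := exists_measurable_superset_of_null (ae_iff.1 hM)
  refine ⟨N ∪ Z, measure_union_null hN hZ, fun {ε} hε x => ?_⟩
  have hlim := (ENNReal.tendsto_ofReal (htrace _ (continuous_bubble_norm_sub hε a x)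
    ⟨_, fun y => abs_bubble_le hε ha _⟩)).mono_left
    (nhdsWithin_mono 0 (sdiff_subset_sdiff_right (subset_union_left (t := Z))))
  rw [bubblePotential_eq_ofReal_integral hε ha]
  refine hlim.congr' ?_
  filter_upwards [self_mem_nhdsWithin] with t ht
  have hi := not_not.1 (fun h => ht.2 (Or.inr (hZM h))) ht.1
  rw [hcore.bubblePotential_massMeasure hρ hρ0 hε ha hi.1, pairing]

end Convergence

lemma AdmissibleWeight.ae_const_mul_rpow_le {d : ℕ} {ρ : Ed d → ℝ} {γ₀ γ c C q : ℝ} (hd : 0 < d)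
    (hγ₀ : 0 ≤ γ₀) (hγ : 0 ≤ γ) (hq : γ ≤ q) (hρ : AdmissibleWeight d ρ γ₀ γ c C) :
    ∀ᵐ x, c * (1 + ‖x‖) ^ (-q) ≤ ρ x := by
  have : Nonempty (Fin d) := ⟨⟨0, hd⟩⟩
  obtain ⟨hc, -, -, -, hin, hout⟩ := hρ
  filter_upwards [hin, hout, Measure.ae_ne volume 0] with x hxin hxout hx0
  have hx := norm_pos_iff.2 hx0
  rcases le_or_gt ‖x‖ 1 with h | h
  · refine (mul_le_mul_of_nonneg_left ?_ hc.le).trans (hxin h).1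
    exact (Real.rpow_le_one_of_one_le_of_nonpos (by linarith) (by linarith)).trans
      (Real.one_le_rpow_of_pos_of_le_one_of_nonpos hx h (by linarith))
  · refine (mul_le_mul_of_nonneg_left ?_ hc.le).trans (hxout h).1
    exact (Real.rpow_le_rpow_of_exponent_le (by linarith) (by linarith)).trans
      (Real.rpow_le_rpow_of_nonpos hx (by linarith) (by linarith))

theorem potential_converges_to_initial_potential_general {d : ℕ} {s m κ c : ℝ}
    (hs0 : 0 < s) (hs1 : s < 1) (hd : 2 * s ≤ d) (hm : 1 ≤ m) (hκ : 0 ≤ κ) (k : ℝ≥0)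
    {ρ : Ed d → ℝ} (hρ : Measurable ρ) (hc : 0 < c)
    (hρc : ∀ᵐ x, c * (1 + ‖x‖) ^ (-(d : ℝ)) ≤ ρ x) {μ : Measure (Ed d)} [IsFiniteMeasure μ]
    {u : Ed d → ℝ → ℝ} (hu : IsWeakSolution d s m κ ρ μ u) :
    ∃ N : Set ℝ, volume N = 0 ∧ ∀ x : Ed d,
      Tendsto (fun t => rieszPotU d s k ρ u x t) (𝓝[Ioi 0 \ N] 0)
        (𝓝 (rieszPotMeas d s k μ x)) := by
  obtain ⟨N, hN, hlim⟩ := hu.exists_tendsto_bubblePotential hρ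
    (ae_nonneg_of_ae_const_mul_rpow_le hc hρc) (a := d - 2 * s) (by linarith)
  have hle := ae_all_iff.2 fun n : ℕ =>
    hu.ae_bubblePotential_le hs0 hs1 hd hm hκ hρ hc hρc (Nat.one_div_pos_of_nat (n := n))
  obtain ⟨Z, hZle, -, hZ⟩ := exists_measurable_superset_of_null (ae_iff.1 hle)
  refine ⟨N ∪ Z, measure_union_null hN hZ, fun x => ?_⟩
  simp only [hu.1.rieszPotU_eq_rieszPotMeas hρ, rieszPotMeas_eq_iSup hd]
  refine tendsto_iSup_of_eventually_le (fun n => ENNReal.Tendsto.const_mul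
    ((hlim Nat.one_div_pos_of_nat x).mono_left (nhdsWithin_mono 0
      (sdiff_subset_sdiff_right (subset_union_left (t := Z))))) (Or.inr ENNReal.ofReal_ne_top)) ?_
  filter_upwards [self_mem_nhdsWithin] with t ht n
  exact mul_le_mul_right (not_not.1 (fun h => ht.2 (Or.inr (hZle h))) n ht.1 x) _

/-- **Pointwise convergence of the potential to the potential of the initial
datum.** If `u` is a weak solution with initial datum `μ`, there is a
Lebesgue-null set `N ⊆ (0,∞)` such that for *every* `x ∈ ℝ^d`,
`U(x,t) → U^μ(x)` as `t → 0` with `t ∉ N`. -/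
theorem potential_converges_to_initial_potential
    (d : ℕ) (s m κ k γ₀ γ c C : ℝ)
    (hs0 : 0 < s) (hs1 : s < 1) (hd : 2 * s < (d : ℝ)) (hm : 1 < m)
    (hκ : 0 < κ) (hk : 0 < k)
    (hγ₀0 : 0 ≤ γ₀) (hγ₀γ : γ₀ ≤ γ) (hγs : γ < 2 * s) (hγd : γ ≤ (d : ℝ) - 2 * s)
    (ρ : Ed d → ℝ) (hρ : AdmissibleWeight d ρ γ₀ γ c C)
    (μ : Measure (Ed d)) (hμ : IsFiniteMeasure μ)
    (u : Ed d → ℝ → ℝ) (hu : IsWeakSolution d s m κ ρ μ u) :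
    ∃ N : Set ℝ, volume N = 0 ∧
      ∀ x : Ed d, Tendsto (fun t => rieszPotU d s k ρ u x t)
        (𝓝[(Ioi (0 : ℝ)) \ N] 0) (𝓝 (rieszPotMeas d s k μ x)) := by
  have hd0 : 0 < d := by exact_mod_cast (by linarith : (0 : ℝ) < d)
  exact potential_converges_to_initial_potential_general hs0 hs1 hd.le hm.le hκ.le ⟨k, hk.le⟩
    hρ.2.2.1 hρ.1 (hρ.ae_const_mul_rpow_le hd0 hγ₀0 (hγ₀0.trans hγ₀γ) (by linarith)) hu
end
end

section
/- Let d > 2s, and let ρ : ℝ^d → (0,∞) be measurable with c|x|^{-γ₀} ≤ ρ(x) ≤ C|x|^{-γ₀} for a.e. |x| ≤ 1 and c|x|^{-γ} ≤ ρ(x) ≤ C|x|^{-γ} for a.e. |x| > 1, where 0 < c < C, γ ∈ (0,2s) and γ₀ ∈ [0,γ]. Let v : ℝ^d → ℝ be measurable with ∫_{ℝ^d} |v(x)| ρ(x) dx < ∞ and v essentially bounded. Then the Riesz potential of ρv, namely U(x) := k ∫_{ℝ^d} |x-y|^{2s-d} ρ(y) v(y) dy, is well-defined (the integral converges absolutely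 for every x), is continuous on ℝ^d, bounded, and belongs to L^p(ℝ^d) for every p ∈ (d/(d-2s), ∞). -/
open MeasureTheory Filter Topology Set
open scoped ENNReal NNReal

noncomputable section

/-!
Put `α = d - 2s` and `f = ρv`. Since `|f| ≲ |x|^{-γ₀}` near the origin with `γ₀ < 2s`, and `f` is
bounded elsewhere, `f ∈ L¹ ∩ L^q` for some `q > d/(2s)`. Cut the kernel `|z|^{-α}` at the unit
sphere: the inner part lies in `L¹ ∩ L^p` for the conjugate exponent `p < d/α`, the outer part in
`L^∞ ∩ L^r` for every `r > d/α`. The pairings `L^p ⋆ L^q` and `L^∞ ⋆ L¹` are bounded by Hölder's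
inequality and continuous by continuity of translation in `L^q` and `L¹`. Finally the inner part
convolved with `f` lies in `L¹ ∩ L^∞ ⊆ L^r`, and the outer one in `L^r ⋆ L¹ ⊆ L^r` by Young's
inequality.
-/

open Metric ContinuousLinearMap
open scoped Convolution

theorem rpow_lintegral_mul_le {α : Type*} [MeasurableSpace α] {μ : Measure α} {p : ℝ}
    (hp : 1 ≤ p) {f g : α → ℝ≥0∞} (hf : AEMeasurable f μ) (hg : AEMeasurable g μ) :
    (∫⁻ a, f a * g a ∂μ) ^ p ≤ (∫⁻ a, f a ^ p * g a ∂μ) * (∫⁻ a, g a ∂μ) ^ (p - 1) := by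
  have hp0 : 0 < p := one_pos.trans_le hp
  have exponent : 1 - p⁻¹ = (p - 1) * p⁻¹ := by field_simp
  have split (a : α) : f a * g a = (f a ^ p * g a) ^ p⁻¹ * g a ^ (1 - p⁻¹) := by
    rw [ENNReal.mul_rpow_of_nonneg _ _ (by positivity), ENNReal.rpow_rpow_inv hp0.ne', mul_assoc,
      ← ENNReal.rpow_add_of_nonneg _ _ (by positivity) (by simpa using inv_le_one_of_one_le₀ hp),
      add_sub_cancel, ENNReal.rpow_one]
  have holder : ∫⁻ a, f a * g a ∂μ ≤
      (∫⁻ a, f a ^ p * g a ∂μ) ^ p⁻¹ * (∫⁻ a, g a ∂μ) ^ (1 - p⁻¹) := by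
    simp_rw [split]
    exact ENNReal.lintegral_mul_norm_pow_le ((hf.pow_const p).mul hg) hg (by positivity)
      (by simpa using inv_le_one_of_one_le₀ hp) (add_sub_cancel _ _)
  calc (∫⁻ a, f a * g a ∂μ) ^ p
    _ ≤ ((∫⁻ a, f a ^ p * g a ∂μ) ^ p⁻¹ * (∫⁻ a, g a ∂μ) ^ (1 - p⁻¹)) ^ p := by gcongr
    _ = (∫⁻ a, f a ^ p * g a ∂μ) * (∫⁻ a, g a ∂μ) ^ (p - 1) := by
      rw [ENNReal.mul_rpow_of_nonneg _ _ hp0.le, ENNReal.rpow_inv_rpow hp0.ne', exponent,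
        ENNReal.rpow_mul, ENNReal.rpow_inv_rpow hp0.ne']

theorem memLp_of_integrable_of_bound {α E : Type*} [MeasurableSpace α] [NormedAddCommGroup E]
    {μ : Measure α} {f : α → E} (hf : Integrable f μ) (C : ℝ) (hfC : ∀ᵐ x ∂μ, ‖f x‖ ≤ C)
    {p : ℝ≥0∞} (hp : 1 ≤ p) : MemLp f p μ := by
  obtain rfl | hp' := eq_or_ne p ∞
  · exact memLp_top_of_bound hf.1 C hfC
  have one_le : 1 ≤ p.toReal := by simpa using ENNReal.toReal_mono hp' hp
  have split (x : α) : ‖f x‖ ^ p.toReal = ‖f x‖ * ‖f x‖ ^ (p.toReal - 1) := by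
    simpa using Real.rpow_add_of_nonneg (norm_nonneg (f x)) zero_le_one (sub_nonneg.2 one_le)
  rw [← integrable_norm_rpow_iff hf.1 (one_pos.trans_le hp).ne' hp']
  simp_rw [split]
  refine hf.norm.mul_bdd (c := C ^ (p.toReal - 1))
    (hf.1.norm.aemeasurable.pow_const _).aestronglyMeasurable ?_
  filter_upwards [hfC] with x hx
  rw [Real.norm_of_nonneg (by positivity)]
  gcongr

theorem lintegral_ofReal_norm_rpow_lt_top {α E : Type*} [MeasurableSpace α]
    [NormedAddCommGroup E] {μ : Measure α} {f : α → E} {r : ℝ} (hr : 0 < r)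
    (hf : MemLp f (.ofReal r) μ) : ∫⁻ x, ENNReal.ofReal (‖f x‖ ^ r) ∂μ < ∞ := by
  simpa only [ENNReal.toReal_ofReal hr.le, ← ENNReal.ofReal_rpow_of_nonneg (norm_nonneg _) hr.le,
    ofReal_norm] using lintegral_rpow_enorm_lt_top_of_eLpNorm_lt_top
      (ENNReal.ofReal_pos.2 hr).ne' ENNReal.ofReal_ne_top hf.2

theorem enorm_convolution_le {𝕜 G E F H : Type*} [NontriviallyNormedField 𝕜] [AddCommGroup G]
    [MeasurableSpace G] [NormedAddCommGroup E] [NormedSpace 𝕜 E] [NormedAddCommGroup F]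
    [NormedSpace 𝕜 F] [NormedAddCommGroup H] [NormedSpace 𝕜 H] [NormedSpace ℝ H] {μ : Measure G}
    (L : E →L[𝕜] F →L[𝕜] H) (f : G → E) (g : G → F) (x : G) :
    ‖(f ⋆[L, μ] g) x‖ₑ ≤ ‖L‖ₑ * ((‖f ·‖ₑ) ⋆ₗ[μ] (‖g ·‖ₑ)) x := by
  calc ‖(f ⋆[L, μ] g) x‖ₑ
    _ ≤ ∫⁻ t, ‖L (f t) (g (x - t))‖ₑ ∂μ := enorm_integral_le_lintegral_enorm _
    _ ≤ ∫⁻ t, ‖L‖ₑ * (‖f t‖ₑ * ‖g (-t + x)‖ₑ) ∂μ := by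
      refine lintegral_mono fun t => ?_
      rw [neg_add_eq_sub, ← mul_assoc]
      exact L.le_opENorm₂ _ _
    _ = ‖L‖ₑ * ((‖f ·‖ₑ) ⋆ₗ[μ] (‖g ·‖ₑ)) x := lintegral_const_mul' _ _ enorm_ne_top

section Young

variable {G : Type*} [AddCommGroup G] [MeasurableSpace G] [MeasurableAdd₂ G] [MeasurableNeg G]
  {μ : Measure G} [SFinite μ] [μ.IsAddLeftInvariant]

theorem lintegral_lconvolution {f g : G → ℝ≥0∞} (hf : AEMeasurable f μ)
    (hg : AEMeasurable g μ) :
    ∫⁻ x, (f ⋆ₗ[μ] g) x ∂μ = (∫⁻ x, f x ∂μ) * ∫⁻ x, g x ∂μ := by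
  simp_rw [lconvolution_def]
  rw [lintegral_lintegral_swap]
  · have inner (y : G) : ∫⁻ x, f y * g (-y + x) ∂μ = f y * ∫⁻ x, g x ∂μ := by
      rw [lintegral_const_mul'' _ (by fun_prop), lintegral_add_left_eq_self]
    simp_rw [inner]
    exact lintegral_mul_const'' _ hf
  · fun_prop

variable [μ.IsNegInvariant]

theorem lintegral_rpow_lconvolution_le {p : ℝ} (hp : 1 ≤ p) {f g : G → ℝ≥0∞}
    (hf : AEMeasurable f μ) (hg : AEMeasurable g μ) :
    ∫⁻ x, (f ⋆ₗ[μ] g) x ^ p ∂μ ≤ (∫⁻ x, f x ^ p ∂μ) * (∫⁻ x, g x ∂μ) ^ p := by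
  have pointwise (x : G) :
      (f ⋆ₗ[μ] g) x ^ p ≤ ((f · ^ p) ⋆ₗ[μ] g) x * (∫⁻ y, g y ∂μ) ^ (p - 1) := by
    have total : ∫⁻ y, g (-y + x) ∂μ = ∫⁻ y, g y ∂μ := by
      simp_rw [neg_add_eq_sub]
      exact lintegral_sub_left_eq_self g x
    rw [← total]
    exact rpow_lintegral_mul_le hp hf (by fun_prop)
  calc ∫⁻ x, (f ⋆ₗ[μ] g) x ^ p ∂μ
    _ ≤ ∫⁻ x, ((f · ^ p) ⋆ₗ[μ] g) x * (∫⁻ y, g y ∂μ) ^ (p - 1) ∂μ := lintegral_mono pointwise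
    _ = (∫⁻ x, f x ^ p ∂μ) * (∫⁻ x, g x ∂μ) * (∫⁻ x, g x ∂μ) ^ (p - 1) := by
      rw [lintegral_mul_const'' _ (aemeasurable_lconvolution (hf.pow_const p) hg),
        lintegral_lconvolution (hf.pow_const p) hg]
    _ = (∫⁻ x, f x ^ p ∂μ) * (∫⁻ x, g x ∂μ) ^ p := by
      have power (a : ℝ≥0∞) : a * a ^ (p - 1) = a ^ p := by
        simpa using (ENNReal.rpow_add_of_nonneg (x := a) 1 (p - 1) zero_le_one (by linarith)).symm
      rw [mul_assoc, power]

variable {𝕜 E F H : Type*} [RCLike 𝕜]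
  [NormedAddCommGroup E] [NormedSpace 𝕜 E] [NormedAddCommGroup F] [NormedSpace 𝕜 F]
  [NormedAddCommGroup H] [NormedSpace 𝕜 H] [NormedSpace ℝ H]

theorem memLp_convolution_of_integrable {p : ℝ≥0∞} (hp : 1 ≤ p) (hp' : p ≠ ∞) {f : G → E}
    {g : G → F} (hf : MemLp f p μ) (hg : Integrable g μ) (L : E →L[𝕜] F →L[𝕜] H) :
    MemLp (f ⋆[L, μ] g) p μ := by
  have hp0 : p ≠ 0 := (one_pos.trans_le hp).ne'
  refine ⟨(hf.1.convolution_integrand L hg.1).integral_prod_right', ?_⟩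
  rw [eLpNorm_lt_top_iff_lintegral_rpow_enorm_lt_top hp0 hp']
  calc ∫⁻ x, ‖(f ⋆[L, μ] g) x‖ₑ ^ p.toReal ∂μ
    _ ≤ ∫⁻ x, ‖L‖ₑ ^ p.toReal * ((‖f ·‖ₑ) ⋆ₗ[μ] (‖g ·‖ₑ)) x ^ p.toReal ∂μ := by
      gcongr with x
      rw [← ENNReal.mul_rpow_of_nonneg _ _ ENNReal.toReal_nonneg]
      gcongr
      exact enorm_convolution_le L f g x
    _ = ‖L‖ₑ ^ p.toReal * ∫⁻ x, ((‖f ·‖ₑ) ⋆ₗ[μ] (‖g ·‖ₑ)) x ^ p.toReal ∂μ :=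
      lintegral_const_mul' _ _ (by finiteness)
    _ ≤ ‖L‖ₑ ^ p.toReal *
          ((∫⁻ x, ‖f x‖ₑ ^ p.toReal ∂μ) * (∫⁻ x, ‖g x‖ₑ ∂μ) ^ p.toReal) := by
      gcongr
      exact lintegral_rpow_lconvolution_le (by simpa using ENNReal.toReal_mono hp' hp) hf.1.enorm
        hg.1.enorm
    _ < ∞ := by
      have f_finite := lintegral_rpow_enorm_lt_top_of_eLpNorm_lt_top hp0 hp' hf.2
      have g_finite : ∫⁻ x, ‖g x‖ₑ ∂μ < ∞ := hg.2
      finiteness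

end Young

section Holder

variable {𝕜 G E F H : Type*} [RCLike 𝕜] [AddCommGroup G] [MeasurableSpace G]
  [NormedAddCommGroup E] [NormedSpace 𝕜 E] [NormedAddCommGroup F] [NormedSpace 𝕜 F]
  [NormedAddCommGroup H] [NormedSpace 𝕜 H]
  {μ : Measure G} [μ.IsAddLeftInvariant] [μ.IsNegInvariant] {p q : ℝ≥0∞}
  [p.HolderConjugate q] {f : G → E} {g : G → F}

section Measurable

variable [MeasurableAdd G] [MeasurableNeg G]

theorem convolutionExists_of_memLp (hf : MemLp f p μ) (hg : MemLp g q μ)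
    (L : E →L[𝕜] F →L[𝕜] H) : ConvolutionExists f g L μ := fun x =>
  memLp_one_iff_integrable.1 <|
    L.memLp_of_bilin 1 hf (hg.comp_measurePreserving (μ.measurePreserving_sub_left x))

theorem enorm_convolution_le_eLpNorm_mul_eLpNorm [NormedSpace ℝ H] (hf : MemLp f p μ)
    (hg : MemLp g q μ) (L : E →L[𝕜] F →L[𝕜] H) (x : G) :
    ‖(f ⋆[L, μ] g) x‖ₑ ≤ ‖L‖ₑ * eLpNorm f p μ * eLpNorm g q μ := by
  have reflect := μ.measurePreserving_sub_left x
  calc ‖(f ⋆[L, μ] g) x‖ₑ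
    _ ≤ eLpNorm (fun t => L (f t) ((g ∘ (x - ·)) t)) 1 μ := by
      rw [eLpNorm_one_eq_lintegral_enorm]
      exact enorm_integral_le_lintegral_enorm _
    _ ≤ ‖L‖ₑ * eLpNorm f p μ * eLpNorm (g ∘ (x - ·)) q μ :=
      eLpNorm_le_eLpNorm_mul_eLpNorm_of_nnnorm hf.1 (hg.1.comp_measurePreserving reflect) (L · ·)
        ‖L‖₊ (.of_forall fun _ => L.le_opNorm₂ _ _)
    _ = ‖L‖ₑ * eLpNorm f p μ * eLpNorm g q μ := by
      rw [eLpNorm_comp_measurePreserving hg.1 reflect]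

theorem exists_forall_norm_convolution_le [NormedSpace ℝ H] (hf : MemLp f p μ)
    (hg : MemLp g q μ) (L : E →L[𝕜] F →L[𝕜] H) : ∃ B : ℝ, ∀ x, ‖(f ⋆[L, μ] g) x‖ ≤ B := by
  have finite : ‖L‖ₑ * eLpNorm f p μ * eLpNorm g q μ ≠ ∞ := by
    finiteness [hf.2.ne, hg.2.ne]
  refine ⟨(‖L‖ₑ * eLpNorm f p μ * eLpNorm g q μ).toReal, fun x => ?_⟩
  rw [← toReal_enorm]
  exact ENNReal.toReal_mono finite (enorm_convolution_le_eLpNorm_mul_eLpNorm hf hg L x)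

end Measurable

variable [NormedSpace ℝ H] [SMulCommClass ℝ 𝕜 H] [CompleteSpace H] [TopologicalSpace G]
  [IsTopologicalAddGroup G] [BorelSpace G] [μ.InnerRegularCompactLTTop]
  [IsLocallyFiniteMeasure μ]

theorem continuous_convolution_of_memLp (hq : q ≠ ∞) (hf : MemLp f p μ) (hg : MemLp g q μ)
    (L : E →L[𝕜] F →L[𝕜] H) : Continuous (f ⋆[L, μ] g) := by
  have one_le_p : Fact (1 ≤ p) := ⟨ENNReal.HolderConjugate.one_le p q⟩
  have one_le_q : Fact (1 ≤ q) := ⟨ENNReal.HolderConjugate.one_le q p⟩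
  let reflect : C(G, C(G, G)) := ContinuousMap.curry ⟨fun z => z.1 - z.2, continuous_sub⟩
  have reflect_preserving (x : G) : MeasurePreserving (reflect x) μ μ :=
    μ.measurePreserving_sub_left x
  have eq_pairing : f ⋆[L, μ] g = fun x => L.lpPairing μ p q (hf.toLp f)
      (Lp.compMeasurePreserving (reflect x) (reflect_preserving x) (hg.toLp g)) := by
    ext x
    rw [ContinuousLinearMap.lpPairing_eq_integral, Lp.toLp_compMeasurePreserving hg]
    refine integral_congr_ae ?_
    filter_upwards [hf.coeFn_toLp, (hg.comp_measurePreserving (reflect_preserving x)).coeFn_toLp]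
      with t f_eq g_eq
    rw [f_eq, g_eq]
    rfl
  rw [eq_pairing]
  exact (L.lpPairing μ p q (hf.toLp f)).continuous.comp
    (continuous_const.compMeasurePreservingLp reflect.continuous reflect_preserving hq)

end Holder

section LpAddLp

variable {𝕜 G E F H : Type*} [RCLike 𝕜] [AddCommGroup G] [TopologicalSpace G]
  [IsTopologicalAddGroup G] [MeasurableSpace G] [BorelSpace G]
  [NormedAddCommGroup E] [NormedSpace 𝕜 E] [NormedAddCommGroup F] [NormedSpace 𝕜 F]
  [NormedAddCommGroup H] [NormedSpace 𝕜 H] {μ : Measure G} [μ.IsAddLeftInvariant]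
  [μ.IsNegInvariant] {p q r : ℝ≥0∞} [p.HolderConjugate q] {K₁ K₂ : G → E} {f : G → F}

theorem convolutionExists_add_of_memLp (hK₁ : MemLp K₁ p μ) (hK₂ : MemLp K₂ ∞ μ)
    (hf : Integrable f μ) (hfq : MemLp f q μ) (L : E →L[𝕜] F →L[𝕜] H) :
    ConvolutionExists (K₁ + K₂) f L μ := fun x => by
  simp_rw [ConvolutionExistsAt, Pi.add_apply, L.map_add₂]
  exact (convolutionExists_of_memLp hK₁ hfq L x).add
    (convolutionExists_of_memLp hK₂ (memLp_one_iff_integrable.2 hf) L x)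

variable [NormedSpace ℝ H]

theorem convolution_add_of_memLp (hK₁ : MemLp K₁ p μ) (hK₂ : MemLp K₂ ∞ μ)
    (hf : Integrable f μ) (hfq : MemLp f q μ) (L : E →L[𝕜] F →L[𝕜] H) :
    (K₁ + K₂) ⋆[L, μ] f = K₁ ⋆[L, μ] f + K₂ ⋆[L, μ] f :=
  (convolutionExists_of_memLp hK₁ hfq L).add_distrib
    (convolutionExists_of_memLp hK₂ (memLp_one_iff_integrable.2 hf) L)

theorem exists_forall_norm_convolution_add_le (hK₁ : MemLp K₁ p μ) (hK₂ : MemLp K₂ ∞ μ)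
    (hf : Integrable f μ) (hfq : MemLp f q μ) (L : E →L[𝕜] F →L[𝕜] H) :
    ∃ B : ℝ, ∀ x, ‖((K₁ + K₂) ⋆[L, μ] f) x‖ ≤ B := by
  obtain ⟨B₁, hB₁⟩ := exists_forall_norm_convolution_le hK₁ hfq L
  obtain ⟨B₂, hB₂⟩ := exists_forall_norm_convolution_le hK₂ (memLp_one_iff_integrable.2 hf) L
  refine ⟨B₁ + B₂, fun x => ?_⟩
  rw [convolution_add_of_memLp hK₁ hK₂ hf hfq L]
  exact norm_add_le_of_le (hB₁ x) (hB₂ x)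

theorem continuous_convolution_add_of_memLp [SMulCommClass ℝ 𝕜 H] [CompleteSpace H]
    [μ.InnerRegularCompactLTTop] [IsLocallyFiniteMeasure μ] (hq : q ≠ ∞) (hK₁ : MemLp K₁ p μ)
    (hK₂ : MemLp K₂ ∞ μ) (hf : Integrable f μ) (hfq : MemLp f q μ) (L : E →L[𝕜] F →L[𝕜] H) :
    Continuous ((K₁ + K₂) ⋆[L, μ] f) := by
  rw [convolution_add_of_memLp hK₁ hK₂ hf hfq L]
  exact (continuous_convolution_of_memLp hq hK₁ hfq L).add
    (continuous_convolution_of_memLp ENNReal.one_ne_top hK₂ (memLp_one_iff_integrable.2 hf) L)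

theorem memLp_convolution_add [MeasurableAdd₂ G] [SFinite μ] (hr : 1 ≤ r) (hr' : r ≠ ∞)
    (hK₁ : Integrable K₁ μ) (hK₁p : MemLp K₁ p μ) (hK₂ : MemLp K₂ ∞ μ) (hK₂r : MemLp K₂ r μ)
    (hf : Integrable f μ) (hfq : MemLp f q μ) (L : E →L[𝕜] F →L[𝕜] H) :
    MemLp ((K₁ + K₂) ⋆[L, μ] f) r μ := by
  obtain ⟨B, hB⟩ := exists_forall_norm_convolution_le hK₁p hfq L
  rw [convolution_add_of_memLp hK₁p hK₂ hf hfq L]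
  exact (memLp_of_integrable_of_bound (hK₁.integrable_convolution L hf) B (.of_forall hB) hr).add
    (memLp_convolution_of_integrable hr hr' hK₂r hf L)

end LpAddLp

section RieszKernel

variable {E : Type*} [NormedAddCommGroup E]

/-- The unnormalised Riesz kernel `z ↦ ‖z‖ ^ (-α)` of order `dim E - α`. -/
def rieszKernel (α : ℝ) (z : E) : ℝ := ‖z‖ ^ (-α)

theorem norm_rieszKernel_rpow (α t : ℝ) (z : E) : ‖rieszKernel α z‖ ^ t = ‖z‖ ^ (-(α * t)) := by
  rw [rieszKernel, Real.norm_of_nonneg (by positivity), ← Real.rpow_mul (norm_nonneg z), neg_mul]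

/-- The singular part of the Riesz kernel: its restriction to the open unit ball. -/
def rieszKernelNear (α : ℝ) : E → ℝ := (ball 0 1).indicator (rieszKernel α)

/-- The tail of the Riesz kernel: its restriction to the complement of the unit ball. -/
def rieszKernelFar (α : ℝ) : E → ℝ := (ball 0 1)ᶜ.indicator (rieszKernel α)

theorem rieszKernelNear_add_rieszKernelFar (α : ℝ) :
    rieszKernelNear α + rieszKernelFar α = (rieszKernel α : E → ℝ) :=
  indicator_self_add_compl _ _

variable [MeasurableSpace E] [BorelSpace E]

theorem measurable_rieszKernel (α : ℝ) : Measurable (rieszKernel α : E → ℝ) := by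
  unfold rieszKernel
  fun_prop

theorem memLp_top_rieszKernelFar {μ : Measure E} {α : ℝ} (hα : 0 ≤ α) :
    MemLp (rieszKernelFar α) ∞ μ := by
  rw [rieszKernelFar, memLp_indicator_iff_restrict measurableSet_ball.compl]
  refine memLp_top_of_bound (measurable_rieszKernel α).aestronglyMeasurable 1 ?_
  filter_upwards [ae_restrict_mem measurableSet_ball.compl] with z hz
  rw [rieszKernel, Real.norm_of_nonneg (by positivity)]
  exact Real.rpow_le_one_of_one_le_of_nonpos (by simpa using hz) (by linarith)

variable [NormedSpace ℝ E] [FiniteDimensional ℝ E] {μ : Measure E} [μ.IsAddHaarMeasure]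

theorem integrableOn_norm_rpow_neg_compl_ball {β : ℝ} (hβ : Module.finrank ℝ E < β) :
    IntegrableOn (fun z : E => ‖z‖ ^ (-β)) (ball 0 1)ᶜ μ := by
  have decay (z : E) (hz : z ∈ (ball 0 1)ᶜ) : ‖z‖ ^ (-β) ≤ 2 ^ β * (1 + ‖z‖) ^ (-β) := by
    have one_le : 1 ≤ ‖z‖ := by simpa using hz
    calc ‖z‖ ^ (-β)
      _ ≤ (2⁻¹ * (1 + ‖z‖)) ^ (-β) :=
        Real.rpow_le_rpow_of_nonpos (by positivity) (by linarith)
          (by linarith [(Nat.cast_nonneg (Module.finrank ℝ E) : (0 : ℝ) ≤ _)])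
      _ = 2 ^ β * (1 + ‖z‖) ^ (-β) := by
        rw [Real.mul_rpow (by positivity) (by positivity), Real.inv_rpow (by positivity),
          Real.rpow_neg (by positivity), inv_inv]
  refine Integrable.mono' ((integrable_one_add_norm hβ).const_mul (2 ^ β)).integrableOn
    (measurable_norm.pow_const _).aestronglyMeasurable ?_
  filter_upwards [ae_restrict_mem measurableSet_ball.compl] with z hz
  rw [Real.norm_of_nonneg (by positivity)]
  exact decay z hz

theorem memLp_rieszKernelNear [Nontrivial E] {α : ℝ} {p : ℝ≥0∞} (hp0 : p ≠ 0) (hp : p ≠ ∞)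
    (hα : α * p.toReal < Module.finrank ℝ E) : MemLp (rieszKernelNear α) p μ := by
  have meas : Measurable (rieszKernel α : E → ℝ) := measurable_rieszKernel α
  rw [rieszKernelNear, memLp_indicator_iff_restrict measurableSet_ball,
    ← integrable_norm_rpow_iff meas.aestronglyMeasurable hp0 hp]
  refine integrableOn_ball_of_norm_le_rpow (C := 1) Module.finrank_pos hα
    (.of_forall fun z => ?_) (meas.norm.pow_const _).aestronglyMeasurable
  rw [norm_rieszKernel_rpow, Real.norm_of_nonneg (by positivity), one_mul]

theorem memLp_rieszKernelFar {α : ℝ} {p : ℝ≥0∞} (hp : p ≠ ∞)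
    (hα : Module.finrank ℝ E < α * p.toReal) : MemLp (rieszKernelFar α) p μ := by
  have hp0 : p ≠ 0 := by
    rintro rfl
    exact absurd hα (by simp)
  rw [rieszKernelFar, memLp_indicator_iff_restrict measurableSet_ball.compl,
    ← integrable_norm_rpow_iff (measurable_rieszKernel α).aestronglyMeasurable hp0 hp]
  simp_rw [norm_rieszKernel_rpow]
  exact integrableOn_norm_rpow_neg_compl_ball hα

end RieszKernel

section RieszPotential

variable {E F : Type*} [NormedAddCommGroup E] [NormedSpace ℝ E] [FiniteDimensional ℝ E]
  [MeasurableSpace E] [BorelSpace E] [NormedAddCommGroup F] {μ : Measure E} [μ.IsAddHaarMeasure]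

theorem memLp_of_norm_le_rpow_norm [Nontrivial E] {f : E → F} (hf : Integrable f μ) {A β : ℝ}
    {q : ℝ≥0∞} (hq : 1 ≤ q) (hq' : q ≠ ∞) (hβ : β * q.toReal < Module.finrank ℝ E)
    (near : ∀ᵐ x ∂μ, ‖x‖ < 1 → ‖f x‖ ≤ A * ‖x‖ ^ (-β))
    (far : ∀ᵐ x ∂μ, 1 ≤ ‖x‖ → ‖f x‖ ≤ A) : MemLp f q μ := by
  have near_memLp : MemLp ((ball 0 1).indicator f) q μ := by
    refine (memLp_rieszKernelNear (one_pos.trans_le hq).ne' hq' hβ).of_le_mul (c := A)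
      (hf.1.indicator measurableSet_ball) ?_
    filter_upwards [near] with x hx
    by_cases h : x ∈ ball 0 1
    · rw [rieszKernelNear, indicator_of_mem h, indicator_of_mem h, rieszKernel,
        Real.norm_of_nonneg (by positivity)]
      exact hx (by simpa using h)
    · simp [rieszKernelNear, indicator_of_notMem h]
  have far_memLp : MemLp ((ball 0 1)ᶜ.indicator f) q μ := by
    rw [memLp_indicator_iff_restrict measurableSet_ball.compl]
    refine memLp_of_integrable_of_bound hf.integrableOn A ?_ hq
    filter_upwards [ae_restrict_of_ae far, ae_restrict_mem measurableSet_ball.compl] with x hx h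
    exact hx (by simpa using h)
  rw [← indicator_self_add_compl (ball 0 1) f]
  exact near_memLp.add far_memLp

theorem exists_holderConjugate_mul_lt {d α β : ℝ} (hα : 0 ≤ α) (hαd : α < d) (hαβ : α + β < d) :
    ∃ p q : ℝ≥0∞, p.HolderConjugate q ∧ p ≠ ∞ ∧ q ≠ ∞ ∧ α * p.toReal < d ∧ β * q.toReal < d := by
  obtain ⟨t, ht, htd⟩ : ∃ t, max β 0 < t ∧ t < d - α :=
    exists_between (max_lt (by linarith) (by linarith))
  obtain ⟨hβt, ht0⟩ := max_lt_iff.1 ht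
  have hd : 0 < d := by linarith
  have hdt : 0 < d - t := by linarith
  have conj : (d / (d - t)).HolderConjugate (d / t) :=
    Real.holderConjugate_iff.2 ⟨(one_lt_div hdt).2 (by linarith), by field_simp; ring⟩
  refine ⟨ENNReal.ofReal (d / (d - t)), ENNReal.ofReal (d / t), conj.ennrealOfReal,
    ENNReal.ofReal_ne_top, ENNReal.ofReal_ne_top, ?_, ?_⟩
  · rw [ENNReal.toReal_ofReal (by positivity), mul_div_assoc', div_lt_iff₀ hdt, mul_comm]
    gcongr
    linarith
  · rw [ENNReal.toReal_ofReal (by positivity), mul_div_assoc', div_lt_iff₀ ht0, mul_comm]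
    gcongr

variable [NormedSpace ℝ F] {f : E → F} {α : ℝ} {p q r : ℝ≥0∞}

section Convolution

variable [Nontrivial E] [p.HolderConjugate q]

theorem convolutionExists_rieszKernel (hf : Integrable f μ) (hfq : MemLp f q μ) (hp : p ≠ ∞)
    (hα : 0 ≤ α) (hαp : α * p.toReal < Module.finrank ℝ E) :
    ConvolutionExists (rieszKernel α) f (lsmul ℝ ℝ) μ := by
  rw [← rieszKernelNear_add_rieszKernelFar]
  exact convolutionExists_add_of_memLp
    (memLp_rieszKernelNear (ENNReal.HolderConjugate.ne_zero p q) hp hαp)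
    (memLp_top_rieszKernelFar hα) hf hfq _

theorem exists_forall_norm_convolution_rieszKernel_le (hf : Integrable f μ) (hfq : MemLp f q μ)
    (hp : p ≠ ∞) (hα : 0 ≤ α) (hαp : α * p.toReal < Module.finrank ℝ E) :
    ∃ B : ℝ, ∀ x, ‖(rieszKernel α ⋆[lsmul ℝ ℝ, μ] f) x‖ ≤ B := by
  rw [← rieszKernelNear_add_rieszKernelFar]
  exact exists_forall_norm_convolution_add_le
    (memLp_rieszKernelNear (ENNReal.HolderConjugate.ne_zero p q) hp hαp)
    (memLp_top_rieszKernelFar hα) hf hfq _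

theorem continuous_convolution_rieszKernel [CompleteSpace F] (hf : Integrable f μ)
    (hfq : MemLp f q μ) (hp : p ≠ ∞) (hq : q ≠ ∞) (hα : 0 ≤ α)
    (hαp : α * p.toReal < Module.finrank ℝ E) :
    Continuous (rieszKernel α ⋆[lsmul ℝ ℝ, μ] f) := by
  rw [← rieszKernelNear_add_rieszKernelFar]
  exact continuous_convolution_add_of_memLp hq
    (memLp_rieszKernelNear (ENNReal.HolderConjugate.ne_zero p q) hp hαp)
    (memLp_top_rieszKernelFar hα) hf hfq _

theorem memLp_convolution_rieszKernel (hf : Integrable f μ) (hfq : MemLp f q μ) (hp : p ≠ ∞)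
    (hα : 0 ≤ α) (hαp : α * p.toReal < Module.finrank ℝ E) (hr : 1 ≤ r) (hr' : r ≠ ∞)
    (hαr : Module.finrank ℝ E < α * r.toReal) :
    MemLp (rieszKernel α ⋆[lsmul ℝ ℝ, μ] f) r μ := by
  have one_le_p : 1 ≤ p.toReal := by
    simpa using ENNReal.toReal_mono hp (ENNReal.HolderConjugate.one_le p q)
  have near_int : Integrable (rieszKernelNear α) μ := memLp_one_iff_integrable.1 <|
    memLp_rieszKernelNear one_ne_zero ENNReal.one_ne_top <| by
      simpa using (le_mul_of_one_le_right hα one_le_p).trans_lt hαp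
  rw [← rieszKernelNear_add_rieszKernelFar]
  exact memLp_convolution_add hr hr' near_int
    (memLp_rieszKernelNear (ENNReal.HolderConjugate.ne_zero p q) hp hαp)
    (memLp_top_rieszKernelFar hα) (memLp_rieszKernelFar hr' hαr) hf hfq _

end Convolution

theorem memLp_smul_of_abs_le_rpow_norm [Nontrivial E] {ρ : E → ℝ} {v : E → F} {C β : ℝ}
    (hρv : Integrable (fun x => ρ x • v x) μ) (hq : 1 ≤ q) (hq' : q ≠ ∞)
    (hβ : β * q.toReal < Module.finrank ℝ E)
    (hρ_near : ∀ᵐ x ∂μ, ‖x‖ < 1 → |ρ x| ≤ C * ‖x‖ ^ (-β))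
    (hρ_far : ∀ᵐ x ∂μ, 1 ≤ ‖x‖ → |ρ x| ≤ C) (hv : ∃ B : ℝ, ∀ᵐ x ∂μ, ‖v x‖ ≤ B) :
    MemLp (fun x => ρ x • v x) q μ := by
  obtain ⟨B, hB⟩ := hv
  refine memLp_of_norm_le_rpow_norm hρv (A := C * B) hq hq' hβ ?_ ?_
  · filter_upwards [hρ_near, hB] with x hρx hvx hx
    have ρ_le := hρx hx
    calc ‖ρ x • v x‖
      _ = |ρ x| * ‖v x‖ := norm_smul _ _
      _ ≤ C * ‖x‖ ^ (-β) * B := mul_le_mul ρ_le hvx (norm_nonneg _) ((abs_nonneg _).trans ρ_le)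
      _ = C * B * ‖x‖ ^ (-β) := mul_right_comm _ _ _
  · filter_upwards [hρ_far, hB] with x hρx hvx hx
    have ρ_le := hρx hx
    rw [norm_smul]
    exact mul_le_mul ρ_le hvx (norm_nonneg _) ((abs_nonneg _).trans ρ_le)

theorem riesz_potential_weighted_Lp_general [CompleteSpace F] {d : ℕ} {s γ₀ C : ℝ} (k : ℝ)
    (hs : 0 < s) (hE : Module.finrank ℝ E = d) (hd : 2 * s < d) (hγ₀ : γ₀ < 2 * s) {ρ : E → ℝ}
    (hρ : AEStronglyMeasurable ρ μ) (hρ_near : ∀ᵐ x ∂μ, ‖x‖ < 1 → |ρ x| ≤ C * ‖x‖ ^ (-γ₀))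
    (hρ_far : ∀ᵐ x ∂μ, 1 ≤ ‖x‖ → |ρ x| ≤ C)
    {v : E → F} (hv : AEStronglyMeasurable v μ) (hvi : Integrable (fun x => ‖v x‖ * ρ x) μ)
    (hvb : ∃ B : ℝ, ∀ᵐ x ∂μ, ‖v x‖ ≤ B) :
    (∀ x, Integrable (fun y => ‖x - y‖ ^ (2 * s - (d : ℝ)) • ρ y • v y) μ) ∧
    Continuous (fun x => k • ∫ y, ‖x - y‖ ^ (2 * s - (d : ℝ)) • ρ y • v y ∂μ) ∧
    (∃ B : ℝ, ∀ x, ‖k • ∫ y, ‖x - y‖ ^ (2 * s - (d : ℝ)) • ρ y • v y ∂μ‖ ≤ B) ∧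
    (∀ p : ℝ, (d : ℝ) / (d - 2 * s) < p →
      ∫⁻ x, ENNReal.ofReal
        (‖k • ∫ y, ‖x - y‖ ^ (2 * s - (d : ℝ)) • ρ y • v y ∂μ‖ ^ p) ∂μ < ⊤) := by
  subst hE
  have finrank_pos : (0 : ℝ) < Module.finrank ℝ E := by linarith
  have : Nontrivial E := Module.nontrivial_of_finrank_pos (R := ℝ) (by exact_mod_cast finrank_pos)
  have hα : 0 < Module.finrank ℝ E - 2 * s := sub_pos.2 hd
  obtain ⟨p, q, conj, hp, hq, hαp, hγ₀q⟩ := exists_holderConjugate_mul_lt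
    (d := Module.finrank ℝ E) (β := γ₀) hα.le (by linarith) (by linarith)
  have f_int : Integrable (fun x => ρ x • v x) μ :=
    hvi.mono (hρ.smul hv) (.of_forall fun x => by simp [norm_smul, mul_comm])
  have f_memLp : MemLp (fun x => ρ x • v x) q μ := memLp_smul_of_abs_le_rpow_norm f_int
    (ENNReal.HolderConjugate.one_le q p) hq hγ₀q hρ_near hρ_far hvb
  have potential_eq (x : E) : ∫ y, ‖x - y‖ ^ (2 * s - Module.finrank ℝ E) • ρ y • v y ∂μ =
      (rieszKernel (Module.finrank ℝ E - 2 * s) ⋆[lsmul ℝ ℝ, μ] fun y => ρ y • v y) x := by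
    simp_rw [convolution_lsmul_swap, rieszKernel, neg_sub]
  simp_rw [potential_eq]
  refine ⟨fun x => ?_, ?_, ?_, fun r hr => ?_⟩
  · simpa only [rieszKernel, neg_sub, lsmul_apply] using
      (convolutionExists_rieszKernel f_int f_memLp hp hα.le hαp x).integrable_swap
  · exact (continuous_convolution_rieszKernel f_int f_memLp hp hq hα.le hαp).const_smul k
  · obtain ⟨B, hB⟩ := exists_forall_norm_convolution_rieszKernel_le f_int f_memLp hp hα.le hαp
    refine ⟨‖k‖ * B, fun x => ?_⟩
    rw [norm_smul]
    gcongr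
    exact hB x
  · have one_lt : 1 < r := ((one_lt_div hα).2 (by linarith)).trans hr
    have memLp : MemLp (rieszKernel (Module.finrank ℝ E - 2 * s) ⋆[lsmul ℝ ℝ, μ]
        fun y => ρ y • v y) (.ofReal r) μ :=
      memLp_convolution_rieszKernel f_int f_memLp hp hα.le hαp (by simpa using one_lt.le)
        ENNReal.ofReal_ne_top
        (by rwa [ENNReal.toReal_ofReal (by linarith), mul_comm, ← div_lt_iff₀ hα])
    exact lintegral_ofReal_norm_rpow_lt_top (by linarith) (memLp.const_smul k)

end RieszPotential

namespace AdmissibleWeight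

variable {d : ℕ} {ρ : Ed d → ℝ} {γ₀ γ c C : ℝ}

theorem ae_abs_le_of_norm_lt_one (hρ : AdmissibleWeight d ρ γ₀ γ c C) :
    ∀ᵐ x, ‖x‖ < 1 → |ρ x| ≤ C * ‖x‖ ^ (-γ₀) := by
  obtain ⟨-, -, -, ρ_pos, near, -⟩ := hρ
  filter_upwards [near] with x hx x_lt
  rw [abs_of_pos (ρ_pos x)]
  exact (hx x_lt.le).2

theorem ae_abs_le_of_one_le_norm (hρ : AdmissibleWeight d ρ γ₀ γ c C) (hγ : 0 ≤ γ) :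
    ∀ᵐ x, 1 ≤ ‖x‖ → |ρ x| ≤ C := by
  obtain ⟨c_pos, c_lt_C, -, ρ_pos, near, far⟩ := hρ
  filter_upwards [near, far] with x x_near x_far one_le
  rw [abs_of_pos (ρ_pos x)]
  obtain one_eq | one_lt := one_le.eq_or_lt
  · simpa [← one_eq] using (x_near one_eq.ge).2
  · exact (x_far one_lt).2.trans <| mul_le_of_le_one_right (c_pos.trans c_lt_C).le <|
      Real.rpow_le_one_of_one_le_of_nonpos one_le (neg_nonpos.2 hγ)

end AdmissibleWeight

/-- **Riesz potential of `ρv` for `v ∈ L¹_ρ ∩ L^∞`.** For an admissible weight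
with `γ ∈ (0,2s)`, the Riesz potential `U(x) = k ∫ |x-y|^{2s-d} ρ(y)v(y) dy`
of `ρ v` is well-defined (absolutely convergent for every `x`), continuous,
bounded, and lies in `L^p(ℝ^d)` for every `p ∈ (d/(d-2s), ∞)`. -/
theorem riesz_potential_weighted_Lp
    (d : ℕ) (s k γ₀ γ c C : ℝ)
    (hs0 : 0 < s) (hs1 : s < 1) (hd : 2 * s < (d : ℝ)) (hk : 0 < k)
    (hγ0 : 0 < γ) (hγs : γ < 2 * s) (hγ₀0 : 0 ≤ γ₀) (hγ₀γ : γ₀ ≤ γ)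
    (ρ : Ed d → ℝ) (hρ : AdmissibleWeight d ρ γ₀ γ c C)
    (v : Ed d → ℝ) (hvm : Measurable v)
    (hvi : Integrable (fun x : Ed d => |v x| * ρ x))
    (hvb : ∃ B : ℝ, ∀ᵐ x ∂(volume : Measure (Ed d)), |v x| ≤ B) :
    (∀ x : Ed d, Integrable
      (fun y : Ed d => ‖x - y‖ ^ (2 * s - (d : ℝ)) * (ρ y * v y))) ∧
    Continuous (fun x : Ed d =>
      k * ∫ y : Ed d, ‖x - y‖ ^ (2 * s - (d : ℝ)) * (ρ y * v y)) ∧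
    (∃ B : ℝ, ∀ x : Ed d,
      |k * ∫ y : Ed d, ‖x - y‖ ^ (2 * s - (d : ℝ)) * (ρ y * v y)| ≤ B) ∧
    (∀ p : ℝ, (d : ℝ) / ((d : ℝ) - 2 * s) < p →
      (∫⁻ x : Ed d, ENNReal.ofReal
        (|k * ∫ y : Ed d, ‖x - y‖ ^ (2 * s - (d : ℝ)) * (ρ y * v y)| ^ p)) < ⊤) :=
  riesz_potential_weighted_Lp_general k hs0 finrank_euclideanSpace_fin hd (hγ₀γ.trans_lt hγs)
    hρ.2.2.1.aestronglyMeasurable hρ.ae_abs_le_of_norm_lt_one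
    (hρ.ae_abs_le_of_one_le_norm hγ0.le) hvm.aestronglyMeasurable hvi hvb
end
end
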